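/- arXiv:2401.14335 — 5 statements merged into one kernel-verified Lean document; each statement's English description precedes it below -/
import Mathlib

section
/- Every positive integer m that does not lie in the set [1,17] ∪ [19,21] ∪ [23,28] ∪ [31,33] ∪ [35,36] ∪ [38,40] ∪ [43,45] ∪ [48,49] ∪ [51,52] ∪ [55,57] ∪ {60, 62, 65, 68, 69, 77, 80, 81, 85, 93, 121} can be written both as a sum of distinct primes congruent to 1 modulo 4 and as a sum of distinct primes congruent to 3 modulo 4. -/
open Finset

/-- The exceptional set of positive integers:
`[1,17] ∪ [19,21] ∪ [23,28] ∪ [31,33] ∪ [35,36] ∪ [38,40] ∪ [43,45] ∪ [48,49] ∪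
[51,52] ∪ [55,57] ∪ {60, 62, 65, 68, 69, 77, 80, 81, 85, 93, 121}`. -/
def exceptionalSet : Finset ℕ :=
  Icc 1 17 ∪ Icc 19 21 ∪ Icc 23 28 ∪ Icc 31 33 ∪ Icc 35 36 ∪ Icc 38 40 ∪
    Icc 43 45 ∪ Icc 48 49 ∪ Icc 51 52 ∪ Icc 55 57 ∪
    ({60, 62, 65, 68, 69, 77, 80, 81, 85, 93, 121} : Finset ℕ)

namespace PF

open ArithmeticFunction in
theorem swap (f g : ArithmeticFunction ℝ) (h : ℕ → ℝ) (N : ℕ)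
    (hh : ∀ n, 0 < n → ∑ x ∈ n.divisorsAntidiagonal, f x.1 * g x.2 = h n) :
    ∑ n ∈ Ioc 0 N, h n = ∑ n ∈ Ioc 0 N, f n * ∑ m ∈ Ioc 0 (N / n), g m := by
  rw [← sum_Ioc_mul_eq_sum_sum]
  refine sum_congr rfl fun n hn => ?_
  rw [mul_apply, hh n (mem_Ioc.1 hn).1]

/-- the real valued character mod 4 -/
noncomputable def c (n : ℕ) : ℝ := ((ZMod.χ₄ (n : ZMod 4) : ℤ) : ℝ)

theorem c_mul (a b : ℕ) : c (a * b) = c a * c b := by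
  rw [c, c, c, Nat.cast_mul, map_mul, Int.cast_mul]

theorem c_even {n : ℕ} (h : n % 2 = 0) : c n = 0 := by
  rw [c, ZMod.χ₄_nat_eq_if_mod_four, if_pos h, Int.cast_zero]

theorem c_one {n : ℕ} (h : n % 4 = 1) : c n = 1 := by
  simp [c, ZMod.χ₄_nat_one_mod_four h]

theorem c_three {n : ℕ} (h : n % 4 = 3) : c n = -1 := by
  simp [c, ZMod.χ₄_nat_three_mod_four h]

theorem c_odd (i : ℕ) : c (2 * i + 1) = (-1) ^ i := by
  have : (2 * i + 1) / 2 = i := by omega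
  rw [c, ZMod.χ₄_eq_neg_one_pow (by omega), this]; push_cast; rfl

theorem c_abs (n : ℕ) : |c n| ≤ 1 := by
  have : n % 2 = 0 ∨ n % 4 = 1 ∨ n % 4 = 3 := by omega
  rcases this with h | h | h
  · simp [c_even h]
  · simp [c_one h]
  · simp [c_three h]

theorem c_sum (f : ℕ → ℝ) (M : ℕ) :
    ∑ m ∈ Ioc 0 M, c m * f m = ∑ i ∈ range ((M + 1) / 2), (-1) ^ i * f (2 * i + 1) := by
  induction M with
  | zero => simp
  | succ M ih =>
    rw [sum_Ioc_succ_top (Nat.zero_le _), ih]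
    rcases Nat.even_or_odd' M with ⟨k, rfl | rfl⟩
    · have h1 : (2 * k + 1 + 1) / 2 = k + 1 := by omega
      have h2 : (2 * k + 1) / 2 = k := by omega
      rw [h1, h2, sum_range_succ, c_odd]
    · have h1 : (2 * k + 1 + 1 + 1) / 2 = k + 1 := by omega
      have h2 : (2 * k + 1 + 1) / 2 = k + 1 := by omega
      rw [h1, h2, c_even (by omega)]; simp

theorem alt_bound (k : ℕ) : ∀ (a : ℕ → ℝ), (∀ i, 0 ≤ a i) → Antitone a →
    0 ≤ ∑ i ∈ range k, (-1 : ℝ) ^ i * a i ∧ ∑ i ∈ range k, (-1 : ℝ) ^ i * a i ≤ a 0 := by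
  induction k with
  | zero => intro a h _; simpa using h 0
  | succ k ih =>
    intro a h0 ha
    obtain ⟨h1, h2⟩ := ih (fun i => a (i + 1)) (fun i => h0 _) (fun i j h => ha (by omega))
    have e : ∑ i ∈ range (k + 1), (-1 : ℝ) ^ i * a i
        = a 0 - ∑ i ∈ range k, (-1 : ℝ) ^ i * a (i + 1) := by
      rw [sum_range_succ', sub_eq_neg_add, ← sum_neg_distrib]
      congr 1
      · refine sum_congr rfl fun i _ => ?_
        ring
      · simp
    have := ha (Nat.zero_le 1)
    simp only [zero_add] at h2
    rw [e]; constructor <;> linarith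

theorem G_bound (M : ℕ) :
    |∑ m ∈ Ioc 0 M, c m * (1 / (m : ℝ)) - Real.pi / 4| ≤ 1 / ((M : ℝ) + 1) := by
  rw [c_sum]
  set f : ℕ → ℝ := fun i => 1 / (((2 * i + 1 : ℕ)) : ℝ) with hf
  have hfa : Antitone f := by
    intro i j h
    simp only [hf]; gcongr
  have hl : Filter.Tendsto (fun n ↦ ∑ i ∈ range n, (-1 : ℝ) ^ i * f i) Filter.atTop
      (nhds (Real.pi / 4)) := by
    convert Real.tendsto_sum_pi_div_four using 4 with k i
    simp [hf, div_eq_mul_inv]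
  have key : ∀ k, |∑ i ∈ range k, (-1 : ℝ) ^ i * f i - Real.pi / 4| ≤ f k := by
    intro k
    have lo := hfa.alternating_series_le_tendsto hl
    have up := hfa.tendsto_le_alternating_series hl
    rcases Nat.even_or_odd' k with ⟨j, rfl | rfl⟩
    · have h1 := lo j
      have h2 := up j
      rw [sum_range_succ] at h2
      simp only [pow_mul] at h1 h2 ⊢
      norm_num at h2
      rw [abs_le]; constructor <;> linarith
    · have h1 := lo (j + 1)
      have h2 := up j
      rw [show 2 * (j + 1) = 2 * j + 1 + 1 by ring, sum_range_succ] at h1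
      have : (-1 : ℝ) ^ (2 * j + 1) = -1 := by simp [pow_succ, pow_mul]
      rw [this] at h1
      rw [abs_le]; constructor <;> linarith
  refine (key _).trans ?_
  simp only [hf]
  apply one_div_le_one_div_of_le (by positivity)
  have : M + 1 ≤ 2 * ((M + 1) / 2) + 1 := by omega
  exact_mod_cast this

theorem log3 : Real.log 3 ≤ 1.2 := by
  have h2 : Real.log (3 ^ 5) ≤ Real.log (2 ^ 8) := Real.log_le_log (by norm_num) (by norm_num)
  rw [Real.log_pow, Real.log_pow] at h2
  have := Real.log_two_lt_d9
  push_cast at h2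
  linarith

theorem H_bound (N : ℕ) : |∑ n ∈ Ioc 0 N, c n * (Real.log n / n)| ≤ 0.4 := by
  rw [c_sum]
  generalize (N + 1) / 2 = k
  rcases k with _ | k
  · norm_num
  rw [sum_range_succ']
  have ha : Antitone (fun i : ℕ => Real.log ((2 * (i + 1) + 1 : ℕ) : ℝ) / ((2 * (i + 1) + 1 : ℕ) : ℝ)) := by
    intro i j h
    have he := Real.exp_one_lt_three
    refine Real.log_div_self_antitoneOn ?_ ?_ ?_
    · simp only [Set.mem_Ici]; push_cast; linarith [(Nat.cast_nonneg i : (0 : ℝ) ≤ i)]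
    · simp only [Set.mem_Ici]; push_cast; linarith [(Nat.cast_nonneg j : (0 : ℝ) ≤ j)]
    · exact_mod_cast (by omega)
  obtain ⟨h1, h2⟩ := alt_bound k _ (fun i => div_nonneg (Real.log_natCast_nonneg _) (by positivity)) ha
  have e : ∀ i : ℕ, (-1 : ℝ) ^ (i + 1) * (Real.log ((2 * (i + 1) + 1 : ℕ) : ℝ) / ((2 * (i + 1) + 1 : ℕ) : ℝ))
     = - ((-1 : ℝ) ^ i * (Real.log ((2 * (i + 1) + 1 : ℕ) : ℝ) / ((2 * (i + 1) + 1 : ℕ) : ℝ))) := by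
    intro i; ring
  simp only [e, sum_neg_distrib]
  have h3 := log3
  norm_num at h2 ⊢
  norm_num at h1
  rw [abs_le]; constructor <;> linarith

open ArithmeticFunction (vonMangoldt)

noncomputable def A (N : ℕ) : ℝ := ∑ n ∈ Ioc 0 N, vonMangoldt n / n
noncomputable def B (N : ℕ) : ℝ := ∑ n ∈ Ioc 0 N, c n * vonMangoldt n / n

theorem psi_nat (N : ℕ) : Chebyshev.psi N = ∑ n ∈ Ioc 0 N, vonMangoldt n := by
  simp [Chebyshev.psi]

theorem log_sqrt_bound {y : ℝ} (hy : 2 ^ 36 ≤ y) : Real.log y ≤ √y * (25 / 2 ^ 18) := by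
  have h0 : (0 : ℝ) < √y := Real.sqrt_pos.2 (by linarith)
  have he : Real.exp 2 ≤ 2 ^ 36 := by
    have := Real.exp_one_lt_three
    have h : Real.exp 2 = Real.exp 1 ^ 2 := by rw [← Real.exp_nat_mul]; norm_num
    have := Real.exp_pos 1
    rw [h]; nlinarith
  have := Real.log_div_sqrt_antitoneOn (Set.mem_Ici.2 he) (Set.mem_Ici.2 (he.trans hy)) hy
  simp only at this
  have hs : √((2 : ℝ) ^ 36) = 2 ^ 18 := by
    rw [show ((2 : ℝ) ^ 36) = (2 ^ 18) ^ 2 by norm_num, Real.sqrt_sq (by norm_num)]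
  rw [hs, Real.log_pow, div_le_iff₀ h0] at this
  have h2 := Real.log_two_lt_d9
  refine this.trans ?_
  rw [mul_comm]
  gcongr
  push_cast; linarith

theorem log_sqrt_bound' {y : ℝ} (hy : 2 ^ 50 ≤ y) : Real.log y ≤ √y * (35 / 2 ^ 25) := by
  have h0 : (0 : ℝ) < √y := Real.sqrt_pos.2 (by linarith)
  have he : Real.exp 2 ≤ 2 ^ 50 := by
    have := Real.exp_one_lt_three
    have h : Real.exp 2 = Real.exp 1 ^ 2 := by rw [← Real.exp_nat_mul]; norm_num
    have := Real.exp_pos 1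
    rw [h]; nlinarith
  have := Real.log_div_sqrt_antitoneOn (Set.mem_Ici.2 he) (Set.mem_Ici.2 (he.trans hy)) hy
  simp only at this
  have hs : √((2 : ℝ) ^ 50) = 2 ^ 25 := by
    rw [show ((2 : ℝ) ^ 50) = (2 ^ 25) ^ 2 by norm_num, Real.sqrt_sq (by norm_num)]
  rw [hs, Real.log_pow, div_le_iff₀ h0] at this
  have h2 := Real.log_two_lt_d9
  refine this.trans ?_
  rw [mul_comm]
  gcongr
  push_cast; linarith

theorem psi_bound {N : ℕ} (hN : 2 ^ 36 ≤ N) : ∑ n ∈ Ioc 0 N, vonMangoldt n ≤ 1.4 * N := by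
  have hN' : (2 : ℝ) ^ 36 ≤ N := by exact_mod_cast hN
  have h := Chebyshev.psi_le (x := N) (by linarith)
  rw [psi_nat] at h
  refine h.trans ?_
  have h1 := log_sqrt_bound hN'
  have h4 : Real.log 4 = 2 * Real.log 2 := by
    rw [show (4 : ℝ) = 2 ^ 2 by norm_num, Real.log_pow]; push_cast; ring
  have h2 := Real.log_two_lt_d9
  have h3 : √(N : ℝ) * √(N : ℝ) = N := Real.mul_self_sqrt (by positivity)
  have h5 : √(N : ℝ) * Real.log N ≤ √(N : ℝ) * (√(N : ℝ) * (25 / 2 ^ 18)) := by gcongr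
  rw [← mul_assoc, h3] at h5
  rw [h4]
  nlinarith

theorem sum_log (N : ℕ) : ∑ n ∈ Ioc 0 N, Real.log n = Real.log (N.factorial : ℝ) := by
  induction N with
  | zero => simp
  | succ N ih =>
    rw [sum_Ioc_succ_top (Nat.zero_le _), ih, Nat.factorial_succ, Nat.cast_mul,
      Real.log_mul (by positivity) (by positivity)]
    ring

open ArithmeticFunction in
theorem log_fact (N : ℕ) :
    Real.log (N.factorial : ℝ) = ∑ n ∈ Ioc 0 N, vonMangoldt n * ((N / n : ℕ) : ℝ) := by
  rw [← sum_log, swap vonMangoldt (zeta : ArithmeticFunction ℝ) (fun n => Real.log n)]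
  · refine sum_congr rfl fun n hn => ?_
    congr 1
    have := sum_Ioc_zeta (N / n)
    simp only [natCoe_apply]
    exact_mod_cast this
  · intro n hn
    rw [← mul_apply, vonMangoldt_mul_zeta]; simp

theorem A_lower {N : ℕ} (hN : 0 < N) : Real.log N - 1 ≤ A N := by
  have h1 := Stirling.le_log_factorial_stirling hN.ne'
  have hN' : (1 : ℝ) ≤ N := by exact_mod_cast hN
  have h2 : 0 ≤ Real.log N := Real.log_natCast_nonneg _
  have h3 : 0 ≤ Real.log (2 * Real.pi) := Real.log_nonneg (by linarith [Real.pi_gt_three])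
  rw [log_fact] at h1
  have h4 : ∑ n ∈ Ioc 0 N, vonMangoldt n * ((N / n : ℕ) : ℝ) ≤ N * A N := by
    rw [A, mul_sum]
    refine sum_le_sum fun n hn => ?_
    have := Nat.cast_div_le (m := N) (n := n) (α := ℝ)
    have h0 : 0 ≤ vonMangoldt n := ArithmeticFunction.vonMangoldt_nonneg
    calc _ ≤ vonMangoldt n * ((N : ℝ) / n) := by gcongr
      _ = _ := by ring
  have : (N : ℝ) * (Real.log N - 1) ≤ N * A N := by linarith
  exact le_of_mul_le_mul_left this (by linarith)

theorem A_upper {N : ℕ} (hN : 2 ^ 36 ≤ N) : A N ≤ Real.log N + 1.4 := by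
  have hN' : (1 : ℝ) ≤ N := by exact_mod_cast (by omega : 1 ≤ N)
  have h1 : Real.log (N.factorial : ℝ) ≤ N * Real.log N := by
    rw [← sum_log]
    calc _ ≤ ∑ n ∈ Ioc 0 N, Real.log N := by
          refine sum_le_sum fun n hn => ?_
          obtain ⟨a, b⟩ := mem_Ioc.1 hn
          apply Real.log_le_log (by exact_mod_cast a) (by exact_mod_cast b)
      _ = _ := by simp
  have h2 := psi_bound hN
  rw [log_fact] at h1
  have h4 : N * A N - ∑ n ∈ Ioc 0 N, vonMangoldt n
      ≤ ∑ n ∈ Ioc 0 N, vonMangoldt n * ((N / n : ℕ) : ℝ) := by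
    rw [A, mul_sum, ← sum_sub_distrib]
    refine sum_le_sum fun n hn => ?_
    have h0 : 0 ≤ vonMangoldt n := ArithmeticFunction.vonMangoldt_nonneg
    have h5 : (N : ℝ) / n - 1 ≤ ((N / n : ℕ) : ℝ) := by
      rw [← Nat.floor_div_eq_div (K := ℝ)]
      exact (Nat.sub_one_lt_floor _).le
    calc _ = vonMangoldt n * ((N : ℝ) / n - 1) := by ring
      _ ≤ _ := by gcongr
  have : (N : ℝ) * A N ≤ N * (Real.log N + 1.4) := by linarith
  exact le_of_mul_le_mul_left this (by linarith)

open ArithmeticFunction in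
theorem H_eq (N : ℕ) : ∑ n ∈ Ioc 0 N, c n * (Real.log n / n) =
    ∑ d ∈ Ioc 0 N, (c d * vonMangoldt d / d) * ∑ m ∈ Ioc 0 (N / d), c m * (1 / (m : ℝ)) := by
  let f : ArithmeticFunction ℝ := ⟨fun d => c d * vonMangoldt d / d, by simp⟩
  let g : ArithmeticFunction ℝ := ⟨fun m => c m * (1 / (m : ℝ)), by simp⟩
  refine swap f g _ _ ?_
  intro n hn
  have := vonMangoldt_sum (n := n)
  have e := Nat.sum_divisorsAntidiagonal (n := n) (f := fun i _ => vonMangoldt i)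
  rw [← this, ← e, sum_div, mul_sum]
  refine sum_congr rfl fun x hx => ?_
  obtain ⟨rfl, h⟩ := Nat.mem_divisorsAntidiagonal.1 hx
  change c x.1 * vonMangoldt x.1 / x.1 * (c x.2 * (1 / (x.2 : ℝ))) = _
  rw [c_mul]; push_cast
  have h1 : x.1 ≠ 0 := by rintro h'; simp [h'] at h
  have h2 : x.2 ≠ 0 := by rintro h'; simp [h'] at h
  field_simp

theorem B_bound {N : ℕ} (hN : 2 ^ 36 ≤ N) : |B N| ≤ 2.3 := by
  have hN' : (0 : ℝ) < N := by exact_mod_cast (by omega : 0 < N)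
  have h1 := H_bound N
  rw [H_eq] at h1
  have h2 := psi_bound hN
  have h3 : |∑ d ∈ Ioc 0 N, (c d * vonMangoldt d / d) * ∑ m ∈ Ioc 0 (N / d), c m * (1 / (m : ℝ))
      - Real.pi / 4 * B N| ≤ 1.4 := by
    rw [B, mul_sum, ← sum_sub_distrib]
    calc _ ≤ ∑ d ∈ Ioc 0 N, |(c d * vonMangoldt d / d) * ∑ m ∈ Ioc 0 (N / d), c m * (1 / (m : ℝ)) - Real.pi / 4 * (c d * vonMangoldt d / d)| := abs_sum_le_sum_abs _ _
      _ ≤ ∑ d ∈ Ioc 0 N, vonMangoldt d * (1 / N) := by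
          refine sum_le_sum fun d hd => ?_
          have hd0 : (0 : ℝ) < d := by exact_mod_cast (mem_Ioc.1 hd).1
          have h0 : 0 ≤ vonMangoldt d := ArithmeticFunction.vonMangoldt_nonneg
          rw [show ∀ a b p : ℝ, a * b - p * a = a * (b - p) by intros; ring, abs_mul, abs_div, abs_mul,
            abs_of_nonneg h0, abs_of_pos hd0]
          have g := G_bound (N / d)
          have g2 : 1 / (((N / d : ℕ) : ℝ) + 1) ≤ d / N := by
            rw [div_le_div_iff₀ (by positivity) hN']
            have : N < d * (N / d + 1) := Nat.lt_mul_div_succ N (mem_Ioc.1 hd).1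
            have : (N : ℝ) < d * ((N / d : ℕ) + 1) := by exact_mod_cast this
            linarith
          calc _ ≤ 1 * vonMangoldt d / d * (d / N) := by
                gcongr
                · exact c_abs d
                · exact g.trans g2
            _ = _ := by field_simp
      _ ≤ 1.4 := by
          rw [← sum_mul, mul_one_div, div_le_iff₀ hN']; exact h2
  have hpi := Real.pi_gt_d2
  rw [abs_le] at h1 h3 ⊢
  constructor <;> nlinarith

theorem window (a : ℕ) (ha : a = 1 ∨ a = 3) {x : ℕ} (hx : 2 ^ 36 ≤ x) :
    1 ≤ ∑ p ∈ Ioc x (2 ^ 14 * x) with p.Prime ∧ p % 4 = a, Real.log p / p := by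
  set y := 2 ^ 14 * x with hy
  have hxy : x ≤ y := by omega
  have hxp : (0 : ℝ) < x := by exact_mod_cast (by omega : 0 < x)
  obtain ⟨s, hs1, hs2, hs⟩ : ∃ s : ℝ, |s| = 1 ∧ (∀ p : ℕ, p % 2 = 1 → p % 4 = a → s * c p = 1) ∧
      (∀ p : ℕ, p % 2 = 1 → p % 4 ≠ a → s * c p = -1) := by
    rcases ha with rfl | rfl
    · refine ⟨1, by simp, fun p _ h => by simp [c_one h], fun p h h' => ?_⟩
      rw [c_three (by omega)]; norm_num
    · refine ⟨-1, by simp, fun p _ h => by simp [c_three h], fun p h h' => ?_⟩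
      rw [c_one (by omega)]; norm_num
  have hcs : ∀ n, |s * c n| ≤ 1 := by
    intro n; rw [abs_mul, hs1, one_mul]; exact c_abs n
  have hW : ∑ n ∈ Ioc x y, (1 + s * c n) / 2 * (vonMangoldt n / n)
      = ((A y - A x) + s * (B y - B x)) / 2 := by
    have hA : A y - A x = ∑ n ∈ Ioc x y, vonMangoldt n / n := by
      rw [A, A, ← sum_Ioc_consecutive _ (Nat.zero_le x) hxy]; ring
    have hB : B y - B x = ∑ n ∈ Ioc x y, c n * vonMangoldt n / n := by
      rw [B, B, ← sum_Ioc_consecutive _ (Nat.zero_le x) hxy]; ring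
    rw [hA, hB, mul_sum, ← sum_add_distrib, sum_div]
    refine sum_congr rfl fun n _ => ?_
    ring
  have hterm : ∑ n ∈ Ioc x y, (1 + s * c n) / 2 * (vonMangoldt n / n)
      ≤ ∑ n ∈ Ioc x y, ((if n.Prime ∧ n % 4 = a then Real.log n / n else 0) +
        (if ¬ n.Prime then vonMangoldt n / x else 0)) := by
    refine sum_le_sum fun n hn => ?_
    obtain ⟨hn1, hn2⟩ := mem_Ioc.1 hn
    have h0 : 0 ≤ vonMangoldt n := ArithmeticFunction.vonMangoldt_nonneg
    by_cases hp : n.Prime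
    · have hodd : n % 2 = 1 := hp.eq_two_or_odd.resolve_left (by omega)
      by_cases h4 : n % 4 = a
      · simp [hp, h4, hs2 n hodd h4, ArithmeticFunction.vonMangoldt_apply_prime hp]
      · simp [hp, h4, hs n hodd h4]
    · simp only [hp, false_and, if_false, not_false_eq_true, if_true, zero_add]
      have h1 := (abs_le.1 (hcs n)).2
      have hnx : (x : ℝ) ≤ n := by exact_mod_cast hn1.le
      calc _ ≤ 1 * (vonMangoldt n / n) := by gcongr; linarith
        _ ≤ _ := by rw [one_mul]; gcongr
  rw [sum_add_distrib, ← sum_filter, ← sum_filter, hW] at hterm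
  have hyr : (2 : ℝ) ^ 50 ≤ y := by
    have : 2 ^ 50 ≤ y := by omega
    exact_mod_cast this
  have hyx : (y : ℝ) = 2 ^ 14 * x := by rw [hy]; push_cast; ring
  have hnp : ∑ n ∈ Ioc x y with ¬ n.Prime, vonMangoldt n / x ≤ 0.04 := by
    have h1 := Chebyshev.psi_sub_theta_le (x := y) (by linarith)
    rw [Chebyshev.psi_sub_theta_eq_sum_not_prime, Nat.floor_natCast] at h1
    rw [← sum_div, div_le_iff₀ hxp]
    calc _ ≤ ∑ n ∈ Ioc 0 y with ¬ n.Prime, vonMangoldt n := by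
          apply sum_le_sum_of_subset_of_nonneg
          · exact filter_subset_filter _ (Ioc_subset_Ioc_left (Nat.zero_le _))
          · intros; exact ArithmeticFunction.vonMangoldt_nonneg
      _ ≤ 2 * √(y : ℝ) * Real.log y := h1
      _ ≤ 2 * √(y : ℝ) * (√(y : ℝ) * (35 / 2 ^ 25)) := by
          gcongr; exact log_sqrt_bound' hyr
      _ = 2 * (35 / 2 ^ 25) * (√(y : ℝ) * √(y : ℝ)) := by ring
      _ ≤ _ := by
          rw [Real.mul_self_sqrt (by positivity), hyx]
          nlinarith
  have a1 := A_lower (N := y) (by omega)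
  have a2 := A_upper hx
  have b1 := B_bound hx
  have b2 := B_bound (N := y) (by omega)
  have hl : Real.log y = 14 * Real.log 2 + Real.log x := by
    rw [hyx, Real.log_mul (by positivity) hxp.ne', Real.log_pow]; push_cast; ring
  have l2 := Real.log_two_gt_d9
  have hb : |s * (B y - B x)| ≤ 4.6 := by
    rw [abs_mul, hs1, one_mul]
    refine (abs_sub _ _).trans ?_
    linarith
  have := (abs_le.1 hb).1
  linarith

/-- primes in the class `a` in `(x, n]` -/
def S (a x n : ℕ) : ℕ := ∑ p ∈ Ioc x n with p.Prime ∧ p % 4 = a, p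

theorem bigsum (a : ℕ) (ha : a = 1 ∨ a = 3) {n : ℕ} (hn : 2 ^ 50 ≤ n) :
    n + 122 ≤ S a (n / 2 ^ 14) n := by
  obtain ⟨x, hx⟩ : ∃ x, x = n / 2 ^ 14 := ⟨_, rfl⟩
  have hx36 : 2 ^ 36 ≤ x := by omega
  have hyn : 2 ^ 14 * x ≤ n := by omega
  have hny : n < 2 ^ 14 * (x + 1) := by omega
  rw [← hx]
  have hw := window a ha hx36
  set y := 2 ^ 14 * x with hy
  have hxr : (2 : ℝ) ^ 36 ≤ x := by exact_mod_cast hx36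
  have hyx : (y : ℝ) = 2 ^ 14 * x := by rw [hy]; push_cast; ring
  have hyr : (2 : ℝ) ^ 50 ≤ y := by rw [hyx]; linarith
  have hxp : (0 : ℝ) < x := by linarith
  have hlog : Real.log y ≤ x / 2 ^ 30 := by
    refine (log_sqrt_bound' hyr).trans ?_
    have : √(y : ℝ) ≤ x / 2 ^ 11 := by
      rw [Real.sqrt_le_iff]
      refine ⟨by positivity, ?_⟩
      rw [hyx]; nlinarith
    calc _ ≤ x / 2 ^ 11 * (35 / 2 ^ 25 : ℝ) := by gcongr
      _ ≤ _ := by nlinarith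
  have key : (2 ^ 30 * x : ℝ) ≤ S a x n := by
    rw [S]; push_cast
    calc (2 ^ 30 * x : ℝ) ≤ 2 ^ 30 * x * ∑ p ∈ Ioc x y with p.Prime ∧ p % 4 = a, Real.log p / p :=
          le_mul_of_one_le_right (by positivity) hw
      _ ≤ ∑ p ∈ Ioc x y with p.Prime ∧ p % 4 = a, (p : ℝ) := by
          rw [mul_sum]
          refine sum_le_sum fun p hp => ?_
          obtain ⟨h1, h2⟩ := mem_Ioc.1 (mem_filter.1 hp).1
          have h1r : (x : ℝ) ≤ p := by exact_mod_cast h1.le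
          have hp0 : (0 : ℝ) < p := by linarith
          have hlp : Real.log p ≤ x / 2 ^ 30 :=
            (Real.log_le_log hp0 (by exact_mod_cast h2)).trans hlog
          rw [mul_div_assoc', div_le_iff₀ hp0]
          calc (2 ^ 30 * x * Real.log p : ℝ) ≤ 2 ^ 30 * x * (x / 2 ^ 30) := by gcongr
            _ = x * x := by ring
            _ ≤ _ := by gcongr
      _ ≤ _ := by
          apply sum_le_sum_of_subset_of_nonneg
          · exact filter_subset_filter _ (Ioc_subset_Ioc_right hyn)
          · intros; positivity
  have key' : 2 ^ 30 * x ≤ S a x n := by exact_mod_cast key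
  omega

def Rep (a X m : ℕ) : Prop :=
  ∃ T : Finset ℕ, (∀ p ∈ T, p.Prime ∧ p % 4 = a ∧ p ≤ X) ∧ ∑ p ∈ T, p = m

theorem S_succ {a x n : ℕ} (h : x ≤ n) :
    S a x (n + 1) = S a x n + if (n + 1).Prime ∧ (n + 1) % 4 = a then n + 1 else 0 := by
  rw [S, S, sum_filter, sum_Ioc_succ_top h, sum_filter]

theorem cover (a x N : ℕ) (base : ∀ m, 122 ≤ m → m ≤ N → Rep a x m)
    (hG : ∀ n, x ≤ n → n + 122 ≤ N + S a x n) (n : ℕ) (hn : x ≤ n) :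
    ∀ m, 122 ≤ m → m ≤ N + S a x n → Rep a n m := by
  induction n, hn using Nat.le_induction with
  | base => intro m h1 h2; exact base m h1 (by simpa [S] using h2)
  | succ n hn ih =>
    intro m h1 h2
    rw [S_succ hn] at h2
    by_cases hm : m ≤ N + S a x n
    · obtain ⟨T, hT, hs⟩ := ih m h1 hm
      exact ⟨T, fun p hp => ⟨(hT p hp).1, (hT p hp).2.1, (hT p hp).2.2.trans (Nat.le_succ n)⟩, hs⟩
    · split_ifs at h2 with hp
      · have := hG n hn
        obtain ⟨T, hT, hs⟩ := ih (m - (n + 1)) (by omega) (by omega)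
        have hnot : n + 1 ∉ T := fun h => by
          have := (hT _ h).2.2
          omega
        refine ⟨insert (n + 1) T, ?_, ?_⟩
        · intro p hpT
          rcases mem_insert.1 hpT with rfl | h
          · exact ⟨hp.1, hp.2, le_rfl⟩
          · exact ⟨(hT p h).1, (hT p h).2.1, (hT p h).2.2.trans (Nat.le_succ n)⟩
        · rw [sum_insert hnot, hs]; omega
      · omega

/-- modular power -/
def pm (p : ℕ) : ℕ → ℕ → ℕ → ℕ
  | 0, _, _ => 1
  | f + 1, a, k => if k % 2 = 1 then a * pm p f (a * a % p) (k / 2) % p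
      else pm p f (a * a % p) (k / 2)

theorem pm_spec (p f : ℕ) : ∀ a k, k < 2 ^ f → ((pm p f a k : ℕ) : ZMod p) = (a : ZMod p) ^ k := by
  induction f with
  | zero => intro a k h; have : k = 0 := by omega
            subst this; simp [pm]
  | succ f ih =>
    intro a k h
    have h2 := ih (a * a % p) (k / 2) (by rw [pow_succ] at h; omega)
    rw [ZMod.natCast_mod, Nat.cast_mul, ← pow_two (a : ZMod p), ← pow_mul] at h2
    rw [pm]
    split_ifs with hk
    · rw [ZMod.natCast_mod, Nat.cast_mul, h2, ← pow_succ']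
      congr 1; omega
    · rw [h2]; congr 1; omega

def cert (p a : ℕ) : Bool :=
  decide (2 ≤ p) && decide (p < 2 ^ 60) && decide (pm p 60 a (p - 1) % p = 1 % p) &&
    decide (210 ^ 60 % (p - 1) = 0) &&
    [2, 3, 5, 7].all fun q => decide (¬ (p - 1) % q = 0 ∨ ¬ pm p 60 a ((p - 1) / q) % p = 1 % p)

theorem cert_prime {p a : ℕ} (h : cert p a = true) : p.Prime := by
  simp only [cert, Bool.and_eq_true, decide_eq_true_eq, List.all_eq_true] at h
  obtain ⟨⟨⟨⟨h1, h2⟩, h3⟩, h4⟩, h5⟩ := h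
  refine lucas_primality p (a : ZMod p) ?_ ?_
  · rw [← pm_spec p 60 a (p - 1) (by omega)]
    exact_mod_cast (ZMod.natCast_eq_natCast_iff' _ _ _).2 h3
  · intro q hq hd
    have hq210 : q ∣ 210 := hq.dvd_of_dvd_pow (hd.trans (Nat.dvd_of_mod_eq_zero h4))
    have hq' : q ∈ [2, 3, 5, 7] := by
      have e : (210 : ℕ) = 2 * 3 * 5 * 7 := by norm_num
      rw [e, hq.dvd_mul, hq.dvd_mul, hq.dvd_mul, Nat.prime_dvd_prime_iff_eq hq (by norm_num),
        Nat.prime_dvd_prime_iff_eq hq (by norm_num), Nat.prime_dvd_prime_iff_eq hq (by norm_num),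
        Nat.prime_dvd_prime_iff_eq hq (by norm_num)] at hq210
      simp; tauto
    have h6 := (h5 q hq').resolve_left (by simpa using Nat.mod_eq_zero_of_dvd hd)
    rw [← pm_spec p 60 a ((p - 1) / q) ((Nat.div_le_self _ _).trans_lt (by omega))]
    exact fun h => h6 ((ZMod.natCast_eq_natCast_iff' _ _ _).1 (by rw [h, Nat.cast_one]))

def chk (a : ℕ) : ℕ → ℕ → List (ℕ × ℕ) → Bool
  | cur, _, [] => decide (2 ^ 50 ≤ cur)
  | cur, acc, (p, g) :: l => decide (cur < p) && decide (p + 121 ≤ acc) && decide (p % 4 = a) &&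
      cert p g && chk a p (acc + p) l

theorem S_mono {a x m n : ℕ} (h : m ≤ n) : S a x m ≤ S a x n :=
  sum_le_sum_of_subset (filter_subset_filter _ (Ioc_subset_Ioc_right h))

theorem chk_sound (a x N : ℕ) (l : List (ℕ × ℕ)) : ∀ cur acc, chk a cur acc l = true → x ≤ cur →
    acc ≤ N + S a x cur → (∀ n, x ≤ n → n < cur → n + 122 ≤ N + S a x n) →
    ∀ n, x ≤ n → n < 2 ^ 50 → n + 122 ≤ N + S a x n := by
  induction l with
  | nil =>
    intro cur acc h _ _ h3 n hn hn2
    simp only [chk, decide_eq_true_eq] at h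
    exact h3 n hn (by omega)
  | cons pg l ih =>
    obtain ⟨p, g⟩ := pg
    intro cur acc h hx h2 h3
    simp only [chk, Bool.and_eq_true, decide_eq_true_eq] at h
    obtain ⟨⟨⟨⟨c1, c2⟩, c3⟩, c4⟩, c5⟩ := h
    have hp := cert_prime c4
    refine ih p (acc + p) c5 (by omega) ?_ ?_
    · obtain ⟨k, rfl⟩ : ∃ k, p = k + 1 := ⟨p - 1, by omega⟩
      rw [S_succ (by omega), if_pos ⟨hp, c3⟩]
      have := S_mono (a := a) (x := x) (show cur ≤ k by omega)
      omega
    · intro n hn hnp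
      by_cases hc : n < cur
      · exact h3 n hn hc
      · have := S_mono (a := a) (x := x) (show cur ≤ n by omega)
        omega

/-- subset sums as a bit set -/
def bits : List ℕ → ℕ
  | [] => 1
  | p :: l => bits l ||| (bits l <<< p)

theorem bits_sound (l : List ℕ) : l.Nodup → ∀ m, (bits l).testBit m = true →
    ∃ T : Finset ℕ, T ⊆ l.toFinset ∧ ∑ p ∈ T, p = m := by
  induction l with
  | nil =>
    intro _ m h
    refine ⟨∅, by simp, ?_⟩
    simp only [bits, Nat.testBit_one_eq_true_iff_self_eq_zero] at h
    simp [h]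
  | cons p l ih =>
    intro hl m h
    obtain ⟨hp, hl⟩ := List.nodup_cons.1 hl
    simp only [bits, Nat.testBit_or, Nat.testBit_shiftLeft, Bool.or_eq_true, Bool.and_eq_true,
      decide_eq_true_eq] at h
    rcases h with h | ⟨h1, h⟩
    · obtain ⟨T, hT, hs⟩ := ih hl m h
      exact ⟨T, hT.trans (by intro x; simp; tauto), hs⟩
    · obtain ⟨T, hT, hs⟩ := ih hl _ h
      have hn : p ∉ T := fun h => hp (by simpa using hT h)
      refine ⟨insert p T, ?_, ?_⟩
      · intro x hx
        rcases mem_insert.1 hx with rfl | hx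
        · simp
        · simp only [List.toFinset_cons, mem_insert]; exact Or.inr (hT hx)
      · rw [sum_insert hn, hs]; omega

theorem finish (a : ℕ) (ha : a = 1 ∨ a = 3) (l : List ℕ) (ch : List (ℕ × ℕ))
    (hl : l.Nodup) (hp : ∀ p ∈ l, p.Prime ∧ p % 4 = a ∧ p ≤ 113)
    (hb : ∀ m < 698, m = 0 ∨ m ∈ exceptionalSet ∨ (bits l).testBit m = true)
    (hc : chk a 113 697 ch = true) (m : ℕ) (hm : 0 < m) (hme : m ∉ exceptionalSet) :
    ∃ T : Finset ℕ, T.Nonempty ∧ (∀ p ∈ T, p.Prime ∧ p % 4 = a) ∧ ∑ p ∈ T, p = m := by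
  have base : ∀ m, 0 < m → m ∉ exceptionalSet → m ≤ 697 → Rep a 113 m := by
    intro m h0 h1 h2
    obtain ⟨T, hT, hs⟩ := bits_sound l hl m
      (((hb m (by omega)).resolve_left (by omega)).resolve_left h1)
    exact ⟨T, fun p hpT => hp p (by simpa using hT hpT), hs⟩
  have hexc : ∀ m, 122 ≤ m → m ∉ exceptionalSet := by
    intro m h
    simp [exceptionalSet]
    omega
  have hG : ∀ n, 113 ≤ n → n + 122 ≤ 697 + S a 113 n := by
    intro n hn
    by_cases h : n < 2 ^ 50
    · exact chk_sound a 113 697 ch 113 697 hc le_rfl (by omega) (by intros; omega) n hn h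
    · have h1 := bigsum a ha (n := n) (by omega)
      have h2 : S a (n / 2 ^ 14) n ≤ S a 113 n :=
        sum_le_sum_of_subset (filter_subset_filter _ (Ioc_subset_Ioc_left (by omega)))
      omega
  obtain ⟨X, T, hT, hs⟩ : ∃ X, Rep a X m := by
    by_cases h : m ≤ 697
    · exact ⟨113, base m hm hme h⟩
    · refine ⟨m, cover a 113 697 (fun m h1 h2 => base m (by omega) (hexc m h1) h2) hG m (by omega) m
        (by omega) ?_⟩
      have := hG m (by omega)
      omega
  refine ⟨T, ?_, fun p h => ⟨(hT p h).1, (hT p h).2.1⟩, hs⟩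
  rw [nonempty_iff_ne_empty]
  rintro rfl
  simp at hs; omega

end PF

/-- Every positive integer `m` not lying in the exceptional set can be written both as a
sum of distinct primes congruent to `1` modulo `4` and as a sum of distinct primes
congruent to `3` modulo `4`. -/
theorem stmt9 (m : ℕ) (hm : 0 < m) (hme : m ∉ exceptionalSet) :
    (∃ T₁ : Finset ℕ, T₁.Nonempty ∧ (∀ p ∈ T₁, p.Prime ∧ p % 4 = 1) ∧ ∑ p ∈ T₁, p = m) ∧
    (∃ T₂ : Finset ℕ, T₂.Nonempty ∧ (∀ q ∈ T₂, q.Prime ∧ q % 4 = 3) ∧ ∑ q ∈ T₂, q = m) := by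
  exact ⟨PF.finish 1 (by simp)
    [5, 13, 17, 29, 37, 41, 53, 61, 73, 89, 97, 101, 109, 113]
    [(541, 2), (1009, 11), (2017, 5), (4001, 3),
     (8101, 6), (16001, 3), (30241, 11), (61441, 17),
     (122501, 2), (241921, 17), (472393, 5), (940801, 41),
     (1881601, 11), (3750001, 11), (7375873, 5), (14817601, 13),
     (29524501, 10), (58060801, 33), (116688601, 11), (233377201, 17),
     (466560001, 13), (926100001, 13), (1843200001, 13), (3687936001, 19),
     (7318708993, 5), (14702763601, 43), (29386561537, 5), (58525286401, 11),
     (116095057921, 7), (231568526701, 11), (464904586801, 11), (922640625001, 11),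
     (1845703125001, 11), (3688629331969, 17), (7372800000001, 22), (14754517327873, 5),
     (29491200000001, 7), (58926951301121, 6), (117600000000001, 11), (235200000000001, 41),
     (470715894135001, 13), (938066948437501, 6), (1875705066270001, 11)]
    (by decide) (by norm_num) (by decide +kernel) (by decide +kernel) m hm hme,
   PF.finish 3 (by simp)
    [3, 7, 11, 19, 23, 31, 43, 47, 59, 67, 71, 79, 83, 103, 107]
    [(491, 2), (1051, 7), (1471, 6), (2647, 3),
     (4051, 10), (7351, 6), (17011, 2), (33751, 6),
     (51031, 3), (110251, 7), (216091, 10), (425251, 7),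
     (833491, 15), (1500283, 19), (2296351, 6), (5314411, 2),
     (10588411, 3), (20837251, 7), (40841011, 12), (73811251, 2),
     (145860751, 3), (287043751, 3), (574218751, 13), (1093705579, 7),
     (2214843751, 15), (4218578659, 2), (8542968751, 13), (15315378751, 7),
     (32285040751, 13), (60292968751, 3), (125047004419, 3), (244074908071, 11),
     (446596444351, 3), (893397093751, 6), (1794433593751, 6), (3417829931251, 2),
     (6782230728491, 2), (13400956406251, 3), (26160032809891, 2), (48449707031251, 3),
     (99663920795251, 7), (199373412656251, 3), (392400492148351, 7), (791345214843751, 6),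
     (1557312011718751, 14)]
    (by decide) (by norm_num) (by decide +kernel) (by decide +kernel) m hm hme⟩
end

section
/- Every positive integer m not belonging to the set {1, 2, 3, 4, 5, 6, 7, 8, 9, 10, 11, 12, 13, 14, 15, 17, 21, 25, 27} admits two representations as a sum of distinct primes, m = p₁ + ⋯ + p_k = q₁ + ⋯ + q_ℓ with k, ℓ ≥ 1, such that the set of primes {p₁, …, p_k} is disjoint from the set of primes {q₁, …, q_ℓ}. -/
-- Every pair in the window has disjoint representations by primes up to `x`. -/
def PP (x f : ℕ) : Prop := ∀ a b : ℕ, 28 ≤ a → a ≤ f → 28 ≤ b → b ≤ f →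
  ∃ T₁ T₂ : Finset ℕ, Disjoint T₁ T₂ ∧ (∀ p ∈ T₁, p.Prime ∧ p ≤ x) ∧
    (∀ p ∈ T₂, p.Prime ∧ p ≤ x) ∧ ∑ p ∈ T₁, p = a ∧ ∑ p ∈ T₂, p = b

theorem PP.mono {x f y g : ℕ} (h : PP x f) (hx : x ≤ y) (hg : g ≤ f) : PP y g := by
  intro a b h1 h2 h3 h4
  obtain ⟨T, U, hd, hT, hU, e⟩ := h a b h1 (h2.trans hg) h3 (h4.trans hg)
  exact ⟨T, U, hd, fun p hp => ⟨(hT p hp).1, (hT p hp).2.trans hx⟩,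
    fun p hp => ⟨(hU p hp).1, (hU p hp).2.trans hx⟩, e⟩

theorem insert_aux {x p : ℕ} (hp : p.Prime) (hxp : x < p) {T U : Finset ℕ} (hd : Disjoint T U)
    (hT : ∀ p ∈ T, p.Prime ∧ p ≤ x) (hU : ∀ p ∈ U, p.Prime ∧ p ≤ x) :
    Disjoint (insert p T) U ∧ (∀ r ∈ insert p T, r.Prime ∧ r ≤ p) ∧
      (∀ r ∈ U, r.Prime ∧ r ≤ p) ∧ ∑ r ∈ insert p T, r = p + ∑ r ∈ T, r := by
  have h1 : p ∉ T := fun h => by have := (hT p h).2; omega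
  have h2 : p ∉ U := fun h => by have := (hU p h).2; omega
  refine ⟨by simp [Finset.disjoint_insert_left, h2, hd], ?_, ?_, Finset.sum_insert h1⟩
  · intro r hr
    rcases Finset.mem_insert.1 hr with rfl | hr
    · exact ⟨hp, le_rfl⟩
    · exact ⟨(hT r hr).1, by have := (hT r hr).2; omega⟩
  · intro r hr
    exact ⟨(hU r hr).1, by have := (hU r hr).2; omega⟩

theorem PP.step {x f p q : ℕ} (h : PP x f) (hp : p.Prime) (hq : q.Prime) (hxp : x < p)
    (hpq : p < q) (hf : q + 28 ≤ f + 1) : PP q (f + p) := by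
  intro a b ha ha' hb hb'
  by_cases h1 : a ≤ f
  · by_cases h2 : b ≤ f
    · exact (h.mono (by omega) le_rfl) a b ha h1 hb h2
    · obtain ⟨T, U, hd, hT, hU, e1, e2⟩ := h a (b - p) ha h1 (by omega) (by omega)
      obtain ⟨i1, i2, i3, i4⟩ := insert_aux hp hxp hd.symm hU hT
      refine ⟨T, insert p U, i1.symm, fun r hr => ⟨(i3 r hr).1, ?_⟩,
        fun r hr => ⟨(i2 r hr).1, ?_⟩, e1, by omega⟩
      · have := (i3 r hr).2; omega
      · have := (i2 r hr).2; omega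
  · by_cases h2 : b ≤ f
    · obtain ⟨T, U, hd, hT, hU, e1, e2⟩ := h (a - p) b (by omega) (by omega) hb h2
      obtain ⟨i1, i2, i3, i4⟩ := insert_aux hp hxp hd hT hU
      refine ⟨insert p T, U, i1, fun r hr => ⟨(i2 r hr).1, ?_⟩,
        fun r hr => ⟨(i3 r hr).1, ?_⟩, by omega, e2⟩
      · have := (i2 r hr).2; omega
      · have := (i3 r hr).2; omega
    · obtain ⟨T, U, hd, hT, hU, e1, e2⟩ :=
        h (a - p) (b - q) (by omega) (by omega) (by omega) (by omega)
      obtain ⟨i1, i2, i3, i4⟩ := insert_aux hp hxp hd hT hU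
      obtain ⟨j1, j2, j3, j4⟩ := insert_aux hq hpq i1.symm i3 i2
      exact ⟨insert p T, insert q U, j1.symm, j3, j2, by omega, by omega⟩

theorem PP.steps {n : ℕ} (j : ℕ) : ∀ (x f : ℕ) (S : Finset ℕ), PP x f → n ≤ x → x ≤ 4 * n →
    4 * n + 28 ≤ f → (∀ p ∈ S, p.Prime ∧ x < p ∧ p ≤ 4 * n) → 2 * j ≤ S.card →
    PP (4 * n) (f + j * n) := by
  induction j with
  | zero => intro x f S h _ hx _ _ _; exact h.mono hx (by omega)
  | succ j ih =>
    intro x f S h hn hx hf hS hc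
    have hne : S.Nonempty := Finset.card_pos.1 (by omega)
    have hpm := S.min'_mem hne
    set p := S.min' hne with hp
    have c1 : (S.erase p).card = S.card - 1 := Finset.card_erase_of_mem hpm
    have hne' : (S.erase p).Nonempty := Finset.card_pos.1 (by omega)
    have hqm := (S.erase p).min'_mem hne'
    set q := (S.erase p).min' hne' with hq
    have c2 : ((S.erase p).erase q).card = (S.erase p).card - 1 := Finset.card_erase_of_mem hqm
    have hpq : p < q := by
      have h1 := S.min'_le q (Finset.mem_of_mem_erase hqm)
      have h2 := Finset.ne_of_mem_erase hqm
      omega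
    obtain ⟨p1, p2, p3⟩ := hS p hpm
    obtain ⟨q1, q2, q3⟩ := hS q (Finset.mem_of_mem_erase hqm)
    have := ih q (f + p) ((S.erase p).erase q) (h.step p1 q1 p2 hpq (by omega)) (by omega) q3
      (by omega) (fun r hr => ?_) (by omega)
    · exact this.mono le_rfl (by rw [Nat.succ_mul]; omega)
    · have h1 := Finset.mem_of_mem_erase hr
      have h2 := (S.erase p).min'_le r h1
      have h3 := Finset.ne_of_mem_erase hr
      obtain ⟨r1, r2, r3⟩ := hS r (Finset.mem_of_mem_erase h1)
      exact ⟨r1, by omega, r3⟩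

def rep : List ℕ → ℕ → ℕ → Bool
  | [], a, b => a == 0 && b == 0
  | p :: l, a, b => (p.ble a && rep l (a - p) b) || ((p.ble b && rep l a (b - p)) || rep l a b)

theorem rep_sound (l : List ℕ) : ∀ a b : ℕ, l.Nodup → rep l a b = true →
    ∃ T₁ T₂ : Finset ℕ, Disjoint T₁ T₂ ∧ (∀ p ∈ T₁, p ∈ l) ∧
    (∀ p ∈ T₂, p ∈ l) ∧ ∑ p ∈ T₁, p = a ∧ ∑ p ∈ T₂, p = b := by
  induction l with
  | nil =>
    intro a b _ h
    simp [rep] at h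
    exact ⟨∅, ∅, by simp [h.1, h.2]⟩
  | cons p l ih =>
    intro a b hl h
    obtain ⟨hpl, hl⟩ := List.nodup_cons.1 hl
    simp only [rep, Bool.or_eq_true, Bool.and_eq_true, Nat.ble_eq] at h
    rcases h with ⟨hp, h⟩ | ⟨hp, h⟩ | h
    · obtain ⟨T, U, hd, hT, hU, e1, e2⟩ := ih _ _ hl h
      have h1 : p ∉ T := fun h => hpl (hT p h)
      have h2 : p ∉ U := fun h => hpl (hU p h)
      refine ⟨insert p T, U, by simp [Finset.disjoint_insert_left, h2, hd], ?_, ?_, ?_, e2⟩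
      · intro r hr
        rcases Finset.mem_insert.1 hr with rfl | hr
        · simp
        · simp [hT r hr]
      · intro r hr; simp [hU r hr]
      · rw [Finset.sum_insert h1]; omega
    · obtain ⟨T, U, hd, hT, hU, e1, e2⟩ := ih _ _ hl h
      have h1 : p ∉ T := fun h => hpl (hT p h)
      have h2 : p ∉ U := fun h => hpl (hU p h)
      refine ⟨T, insert p U, by simp [Finset.disjoint_insert_right, h1, hd], ?_, ?_, e1, ?_⟩
      · intro r hr; simp [hT r hr]
      · intro r hr
        rcases Finset.mem_insert.1 hr with rfl | hr
        · simp
        · simp [hU r hr]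
      · rw [Finset.sum_insert h2]; omega
    · obtain ⟨T, U, hd, hT, hU, e1, e2⟩ := ih _ _ hl h
      exact ⟨T, U, hd, fun r hr => by simp [hT r hr], fun r hr => by simp [hU r hr], e1, e2⟩

def PL : List ℕ := [31, 29, 23, 19, 17, 13, 11, 7, 5, 3, 2]

theorem PL_prime : ∀ p ∈ PL, p.Prime ∧ p ≤ 31 := by
  intro p hp
  simp only [PL, List.mem_cons, List.not_mem_nil, or_false] at hp
  rcases hp with rfl | rfl | rfl | rfl | rfl | rfl | rfl | rfl | rfl | rfl | rfl <;> norm_num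

theorem PL_check : ∀ i < 49, ∀ j < 49, rep PL (28 + i) (28 + j) = true := by
  decide +kernel

theorem PP_base : PP 31 76 := by
  intro a b ha ha' hb hb'
  have := PL_check (a - 28) (by omega) (b - 28) (by omega)
  rw [Nat.add_sub_cancel' ha, Nat.add_sub_cancel' hb] at this
  obtain ⟨T, U, hd, hT, hU, e⟩ := rep_sound PL a b (by decide) this
  exact ⟨T, U, hd, fun p hp => PL_prime p (hT p hp), fun p hp => PL_prime p (hU p hp), e⟩

theorem PP_1024 : PP (4 ^ 5) (4 * 4 ^ 5 + 28) := by
  have h := PP_base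
  have h := h.step (p := 37) (q := 41) (by norm_num) (by norm_num) (by norm_num) (by norm_num) (by norm_num)
  have h := h.step (p := 43) (q := 47) (by norm_num) (by norm_num) (by norm_num) (by norm_num) (by norm_num)
  have h := h.step (p := 113) (q := 127) (by norm_num) (by norm_num) (by norm_num) (by norm_num) (by norm_num)
  have h := h.step (p := 239) (q := 241) (by norm_num) (by norm_num) (by norm_num) (by norm_num) (by norm_num)
  have h := h.step (p := 467) (q := 479) (by norm_num) (by norm_num) (by norm_num) (by norm_num) (by norm_num)
  have h := h.step (p := 941) (q := 947) (by norm_num) (by norm_num) (by norm_num) (by norm_num) (by norm_num)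
  have h := h.step (p := 953) (q := 967) (by norm_num) (by norm_num) (by norm_num) (by norm_num) (by norm_num)
  have h := h.step (p := 971) (q := 977) (by norm_num) (by norm_num) (by norm_num) (by norm_num) (by norm_num)
  have h := h.step (p := 983) (q := 991) (by norm_num) (by norm_num) (by norm_num) (by norm_num) (by norm_num)
  exact h.mono (by norm_num) (by norm_num)

theorem growth (k : ℕ) (hk : 5 ≤ k) :
    48 * (k + 1) + (2 * k + 3) + 8 * 2 ^ k * (k + 1) ≤ 2 * 4 ^ k := by
  have h4 : (4 : ℕ) ^ k = 2 ^ k * 2 ^ k := by rw [← mul_pow]; norm_num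
  have h : 5 * k + 7 ≤ 2 ^ k := by
    induction k, hk using Nat.le_induction with
    | base => norm_num
    | succ k hk ih => have := ih (by rw [← mul_pow]; norm_num); rw [pow_succ]; omega
  rw [h4]
  nlinarith

theorem many_primes (k : ℕ) (hk : 5 ≤ k) :
    24 ≤ ((Finset.Ioc (4 ^ k) (4 ^ (k + 1))).filter Nat.Prime).card := by
  set S := (Finset.Ioc (4 ^ k) (4 ^ (k + 1))).filter Nat.Prime with hS
  by_contra hlt
  have hle : 4 ^ k ≤ 4 ^ (k + 1) := Nat.pow_le_pow_right (by norm_num) (by omega)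
  have h1 := Chebyshev.theta_ge (4 ^ (k + 1))
  have h2 := Chebyshev.theta_le_log4_mul_x (x := ((4 ^ k : ℕ) : ℝ)) (by positivity)
  have h3 : Chebyshev.theta ((4 ^ (k + 1) : ℕ) : ℝ)
      = Chebyshev.theta ((4 ^ k : ℕ) : ℝ) + ∑ p ∈ S, Real.log p := by
    unfold Chebyshev.theta
    rw [Nat.floor_natCast, Nat.floor_natCast, hS, Finset.sum_filter, Finset.sum_filter,
      Finset.sum_filter]
    rw [Finset.sum_Ioc_consecutive _ (Nat.zero_le _) hle]
  have hl4 : Real.log 4 = 2 * Real.log 2 := by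
    rw [show (4 : ℝ) = 2 ^ 2 by norm_num, Real.log_pow]; norm_num
  have hl2 : 0 < Real.log 2 := Real.log_pos (by norm_num)
  have hlog : Real.log ((4 ^ (k + 1) : ℕ) : ℝ) = (2 * k + 2) * Real.log 2 := by
    push_cast
    rw [Real.log_pow, hl4]; push_cast; ring
  have h4 : ∑ p ∈ S, Real.log p ≤ 24 * ((2 * k + 2) * Real.log 2) := by
    have := Finset.sum_le_card_nsmul S (fun p => Real.log p) ((2 * k + 2) * Real.log 2) (by
      intro p hp
      obtain ⟨hp1, hp2⟩ := Finset.mem_filter.1 hp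
      rw [← hlog]
      exact Real.log_le_log (by exact_mod_cast hp2.pos)
        (by exact_mod_cast (Finset.mem_Ioc.1 hp1).2))
    refine this.trans ?_
    rw [nsmul_eq_mul]
    have : (S.card : ℝ) ≤ 24 := by exact_mod_cast (not_le.1 hlt).le
    gcongr
  have hlt' : (S.card : ℝ) ≤ 23 := by exact_mod_cast (by omega : S.card ≤ 23)
  have h4' : ∑ p ∈ S, Real.log p ≤ 23 * ((2 * k + 2) * Real.log 2) := by
    have := Finset.sum_le_card_nsmul S (fun p => Real.log p) ((2 * k + 2) * Real.log 2) (by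
      intro p hp
      obtain ⟨hp1, hp2⟩ := Finset.mem_filter.1 hp
      rw [← hlog]
      exact Real.log_le_log (by exact_mod_cast hp2.pos)
        (by exact_mod_cast (Finset.mem_Ioc.1 hp1).2))
    refine this.trans ?_
    rw [nsmul_eq_mul]
    gcongr
  have h5 : Real.log (((4 ^ (k + 1) : ℕ) : ℝ) + 1) ≤ (2 * k + 3) * Real.log 2 := by
    have : (((4 ^ (k + 1) : ℕ) : ℝ) + 1) ≤ 2 ^ (2 * k + 3) := by
      have e : (2 : ℝ) ^ (2 * k + 3) = 2 * 4 ^ (k + 1) := by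
        rw [show (4 : ℝ) = 2 ^ 2 by norm_num, ← pow_mul]; ring
      have : (1 : ℝ) ≤ 4 ^ (k + 1) := one_le_pow₀ (by norm_num)
      rw [e]; push_cast; linarith
    have := Real.log_le_log (by positivity) this
    rw [Real.log_pow] at this
    push_cast at this ⊢
    exact this
  have h6 : √((4 ^ (k + 1) : ℕ) : ℝ) = 2 * 2 ^ k := by
    rw [Real.sqrt_eq_iff_mul_self_eq (by positivity) (by positivity)]
    push_cast
    rw [pow_succ, show (4 : ℝ) ^ k = 2 ^ k * 2 ^ k by rw [← mul_pow]; norm_num]; ring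
  have hg : (48 * (k + 1) + (2 * k + 3) + 8 * 2 ^ k * (k + 1) : ℝ) ≤ 2 * 4 ^ k := by
    exact_mod_cast growth k hk
  rw [h6, hlog] at h1
  rw [hl4] at h2
  push_cast at h1 h2 h3 h5
  have hg' := mul_le_mul_of_nonneg_right hg hl2.le
  have hpos : 0 < ((2 * k + 2) * Real.log 2) := by positivity
  have e : (4 : ℝ) ^ (k + 1) = 4 * 4 ^ k := by ring
  rw [e] at h1 h3 h5
  nlinarith

theorem PP_all (k : ℕ) (hk : 5 ≤ k) : PP (4 ^ k) (4 * 4 ^ k + 28) := by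
  induction k, hk using Nat.le_induction with
  | base => exact PP_1024
  | succ k hk ih =>
    have e : 4 ^ (k + 1) = 4 * 4 ^ k := by ring
    have := PP.steps (n := 4 ^ k) 12 (4 ^ k) (4 * 4 ^ k + 28)
      ((Finset.Ioc (4 ^ k) (4 ^ (k + 1))).filter Nat.Prime) ih le_rfl (by omega) le_rfl
      (fun p hp => by
        obtain ⟨h1, h2⟩ := Finset.mem_filter.1 hp
        obtain ⟨h3, h4⟩ := Finset.mem_Ioc.1 h1
        exact ⟨h2, h3, by omega⟩) (many_primes k hk)
    exact this.mono (by omega) (by omega)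

theorem exists_pair (m : ℕ) (hm : 28 ≤ m ∨ rep PL m m = true) :
    ∃ T₁ T₂ : Finset ℕ, Disjoint T₁ T₂ ∧
      (∀ p ∈ T₁, p.Prime) ∧ (∀ q ∈ T₂, q.Prime) ∧
      ∑ p ∈ T₁, p = m ∧ ∑ q ∈ T₂, q = m := by
  rcases hm with h | h
  · have h1 : m + 5 < 4 ^ (m + 5) := Nat.lt_pow_self (by norm_num)
    obtain ⟨T, U, hd, hT, hU, e⟩ := PP_all (m + 5) (by omega) m m h (by omega) h (by omega)
    exact ⟨T, U, hd, fun p hp => (hT p hp).1, fun p hp => (hU p hp).1, e⟩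
  · obtain ⟨T, U, hd, hT, hU, e⟩ := rep_sound PL m m (by decide) h
    exact ⟨T, U, hd, fun p hp => (PL_prime p (hT p hp)).1,
      fun p hp => (PL_prime p (hU p hp)).1, e⟩

theorem small_check : ∀ m < 28, 0 < m →
    m ∉ [1, 2, 3, 4, 5, 6, 7, 8, 9, 10, 11, 12, 13, 14, 15, 17, 21, 25, 27] →
    rep PL m m = true := by
  decide +kernel


/-- Every positive integer `m` outside `{1, …, 15, 17, 21, 25, 27}` admits two
representations as a sum of distinct primes using disjoint sets of primes: there are
nonempty finite sets of primes `T₁` and `T₂` with `T₁ ∩ T₂ = ∅`, each summing to `m`. -/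
theorem stmt10 (m : ℕ) (hm : 0 < m)
    (hme : m ∉ ({1, 2, 3, 4, 5, 6, 7, 8, 9, 10, 11, 12, 13, 14, 15, 17, 21, 25, 27} :
      Finset ℕ)) :
    ∃ T₁ T₂ : Finset ℕ, T₁.Nonempty ∧ T₂.Nonempty ∧ Disjoint T₁ T₂ ∧
      (∀ p ∈ T₁, p.Prime) ∧ (∀ q ∈ T₂, q.Prime) ∧
      ∑ p ∈ T₁, p = m ∧ ∑ q ∈ T₂, q = m := by
  obtain ⟨T, U, hd, hT, hU, e1, e2⟩ := exists_pair m (by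
    by_cases h : 28 ≤ m
    · exact Or.inl h
    · refine Or.inr (small_check m (by omega) hm ?_)
      simpa using hme)
  refine ⟨T, U, ?_, ?_, hd, hT, hU, e1, e2⟩
  · rw [Finset.nonempty_iff_ne_empty]; rintro rfl; simp at e1; omega
  · rw [Finset.nonempty_iff_ne_empty]; rintro rfl; simp at e2; omega
end

section
/- Let n ≥ 4 be an integer such that neither n nor n−1 is a prime number. Then the reduced order-super-commuting graph Δᵒ(Sₙ)* of the symmetric group Sₙ (the graph obtained from Δᵒ(Sₙ) by deleting the identity permutation, which is its unique dominant vertex) is connected and has diameter exactly 3. -/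
/-- The reduced order-super-commuting graph `Δᵒ(Sₙ)*` of the symmetric group on `n`
letters: its vertices are the non-identity permutations (the identity being the unique
dominant vertex of `Δᵒ(Sₙ)` for `n ≥ 4`), and two distinct vertices `x, y` are adjacent
iff there exist commuting `u, v` (possibly `u = v`) with `|u| = |x|` and `|v| = |y|`. -/
def reducedOrderSuperCommutingGraph (n : ℕ) :
    SimpleGraph {x : Equiv.Perm (Fin n) // x ≠ 1} where
  Adj x y := x ≠ y ∧ ∃ u v : Equiv.Perm (Fin n),
    orderOf u = orderOf (x : Equiv.Perm (Fin n)) ∧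
    orderOf v = orderOf (y : Equiv.Perm (Fin n)) ∧ Commute u v
  symm := by
    constructor
    rintro x y ⟨hxy, u, v, hu, hv, huv⟩
    exact ⟨hxy.symm, v, u, hv, hu, huv.symm⟩
  loopless := by constructor; rintro x ⟨h, -⟩; exact h rfl

section
open Real
theorem real_main2 {x : ℝ} (x_large : (512 : ℝ) ≤ x) :
    (x * (2 * x)) * (2 * x) ^ √(2 * x) * 4 ^ (2 * x / 3) ≤ 4 ^ x := by
  let f : ℝ → ℝ := fun x => (log x + (log x + log 2)) + √(2 * x) * log (2 * x) - log 4 / 3 * x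
  have hf' : ∀ x, 0 < x → 0 < (x * (2 * x)) * (2 * x) ^ √(2 * x) / 4 ^ (x / 3) := fun x h => by
    positivity
  have hf : ∀ x, 0 < x → f x = log ((x * (2 * x)) * (2 * x) ^ √(2 * x) / 4 ^ (x / 3)) := by
    intro x h5
    have h6 := mul_pos (zero_lt_two' ℝ) h5
    have h7 := rpow_pos_of_pos h6 (√(2 * x))
    have h8 : 0 < x * (2 * x) := mul_pos h5 h6
    rw [log_div (mul_pos h8 h7).ne' (rpow_pos_of_pos four_pos _).ne', log_mul h8.ne' h7.ne',
      log_rpow h6, log_rpow zero_lt_four, ← mul_div_right_comm, ← mul_div,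
      log_mul h5.ne' h6.ne']
    have := log_mul (two_ne_zero' ℝ) h5.ne'
    simp only [f]
    rw [this]; ring
  have h5 : 0 < x := lt_of_lt_of_le (by norm_num1) x_large
  rw [← div_le_one (rpow_pos_of_pos four_pos x), ← div_div_eq_mul_div, ← rpow_sub four_pos, ←
    mul_div 2 x, mul_div_left_comm, ← mul_one_sub, (by norm_num1 : (1 : ℝ) - 2 / 3 = 1 / 3),
    mul_one_div, ← log_nonpos_iff (hf' x h5).le, ← hf x h5]
  have h : ConcaveOn ℝ (Set.Ioi 0.5) f := by
    apply ConcaveOn.sub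
    · have hl : ConcaveOn ℝ (Set.Ioi (0.5 : ℝ)) log := strictConcaveOn_log_Ioi.concaveOn.subset
          (Set.Ioi_subset_Ioi (by norm_num)) (convex_Ioi 0.5)
      apply ConcaveOn.add
      · exact hl.add (hl.add (concaveOn_const _ (convex_Ioi 0.5)))
      convert!
        ((strictConcaveOn_sqrt_mul_log_Ioi.concaveOn.comp_linearMap ((2 : ℝ) • LinearMap.id)))
        using 1
      ext x
      simp only [Set.mem_Ioi, Set.mem_preimage, LinearMap.smul_apply,
        LinearMap.id_coe, id_eq, smul_eq_mul]
      rw [← mul_lt_mul_iff_right₀ (two_pos)]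
      norm_num1
      rfl
    apply ConvexOn.smul
    · refine div_nonneg (log_nonneg (by norm_num1)) (by norm_num1)
    · exact convexOn_id (convex_Ioi (0.5 : ℝ))
  suffices ∃ x1 x2, 0.5 < x1 ∧ x1 < x2 ∧ x2 ≤ x ∧ 0 ≤ f x1 ∧ f x2 ≤ 0 by
    obtain ⟨x1, x2, h1, h2, h0, h3, h4⟩ := this
    exact (h.right_le_of_le_left'' h1 ((h1.trans h2).trans_le h0) h2 h0 (h4.trans h3)).trans h4
  refine ⟨18, 512, by norm_num1, by norm_num1, x_large, ?_, ?_⟩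
  · have : √(2 * 18 : ℝ) = 6 := (sqrt_eq_iff_mul_self_eq_of_pos (by norm_num1)).mpr (by norm_num1)
    rw [hf _ (by norm_num1), log_nonneg_iff (by positivity), this, one_le_div (by norm_num1)]
    norm_num1
  · have : √(2 * 512) = 32 :=
      (sqrt_eq_iff_mul_self_eq_of_pos (by norm_num1)).mpr (by norm_num1)
    rw [hf _ (by norm_num1), log_nonpos_iff (hf' _ (by norm_num1)).le, this,
        div_le_one (by positivity)]
    have e1 : (512 * (2 * 512) : ℝ) * (2 * 512) ^ (32 : ℝ) = 2 ^ (339 : ℝ) := by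
      rw [show (32 : ℝ) = ((32 : ℕ) : ℝ) by norm_num, show (339 : ℝ) = ((339 : ℕ) : ℝ) by norm_num,
        rpow_natCast, rpow_natCast, show (2 * 512 : ℝ) = 2 ^ 10 by norm_num1,
        show (512 : ℝ) = 2 ^ 9 by norm_num1, ← pow_mul, ← pow_add, ← pow_add]
    rw [e1, show (4 : ℝ) = 2 ^ (2 : ℝ) by rw [rpow_two]; norm_num1, ← rpow_mul (by norm_num1)]
    apply rpow_le_rpow_of_exponent_le
    all_goals norm_num1
end
section
open Nat
theorem nat_main2 {n : ℕ} (n_large : 512 ≤ n) :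
    (n * (2 * n)) * (2 * n) ^ sqrt (2 * n) * 4 ^ (2 * n / 3) ≤ 4 ^ n := by
  rw [← @cast_le ℝ]
  simp only [cast_mul, cast_pow, ← Real.rpow_natCast, cast_ofNat]
  refine _root_.trans ?_ (real_main2 (by exact_mod_cast n_large))
  gcongr
  · have n2_pos : 0 < 2 * n := by positivity
    exact mod_cast n2_pos
  · exact_mod_cast Real.nat_sqrt_le_real_sqrt
  · norm_num1
  · exact cast_div_le.trans (by norm_cast)

theorem cb_le2 (n q : ℕ) (n_large : 2 < n) (hqn : n < q)
    (no_prime : ∀ p : ℕ, p.Prime → n < p → p ≠ q → 2 * n < p) :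
    centralBinom n ≤ (2 * n) * ((2 * n) ^ sqrt (2 * n) * 4 ^ (2 * n / 3)) := by
  have n_pos : 0 < n := (Nat.zero_le _).trans_lt n_large
  have n2_pos : 1 ≤ 2 * n := mul_pos (zero_lt_two' ℕ) n_pos
  let S := {p ∈ Finset.range (2 * n / 3 + 1) | Nat.Prime p}
  let f x := x ^ n.centralBinom.factorization x
  have this : ∏ x ∈ S, f x = ∏ x ∈ Finset.range (2 * n / 3 + 1), f x := by
    refine Finset.prod_filter_of_ne fun p _ h => ?_
    contrapose h; dsimp only [f]
    rw [factorization_eq_zero_of_not_prime n.centralBinom h, _root_.pow_zero]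
  have hq' : q ∉ Finset.range (2 * n / 3 + 1) := by
    rw [Finset.mem_range]; omega
  have hcb : centralBinom n = f q * ∏ x ∈ Finset.range (2 * n / 3 + 1), f x := by
    rw [← Finset.prod_insert hq']
    rw [← n.prod_pow_factorization_centralBinom]
    have hsub : Finset.range (2 * n + 1) ⊆ Finset.range (2 * n + 1) ∪ {q} :=
      Finset.subset_union_left
    rw [Finset.prod_subset hsub, ← Finset.prod_subset (s₁ := insert q (Finset.range (2 * n / 3 + 1)))]
    · intro x hx
      simp only [Finset.mem_insert, Finset.mem_range, Finset.mem_union, Finset.mem_singleton] at hx ⊢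
      omega
    · intro x hx h2x
      simp only [Finset.mem_insert, Finset.mem_range, Finset.mem_union, Finset.mem_singleton, not_or] at hx h2x
      by_cases hp : x.Prime
      · have hxn : x ≤ n := by
          by_contra hc
          have := no_prime x hp (by omega) h2x.1
          omega
        rw [factorization_centralBinom_of_two_mul_self_lt_three_mul n_large hxn (by omega), Nat.pow_zero]
      · rw [factorization_eq_zero_of_not_prime n.centralBinom hp, Nat.pow_zero]
    · intro x hx h2x
      simp only [Finset.mem_range, Finset.mem_union, Finset.mem_singleton] at hx h2x
      have : n.centralBinom.factorization x = 0 := by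
        apply Nat.factorization_choose_eq_zero_of_lt
        omega
      rw [this, Nat.pow_zero]
  rw [hcb, ← this, ←
    Finset.prod_filter_mul_prod_filter_not S (· ≤ sqrt (2 * n))]
  apply mul_le_mul'
  · exact pow_factorization_choose_le (mul_pos two_pos n_pos)
  apply mul_le_mul'
  · refine (Finset.prod_le_prod' fun p _ => (?_ : f p ≤ 2 * n)).trans ?_
    · exact pow_factorization_choose_le (mul_pos two_pos n_pos)
    have : (Finset.Icc 1 (sqrt (2 * n))).card = sqrt (2 * n) := by rw [card_Icc, Nat.add_sub_cancel]
    rw [Finset.prod_const]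
    refine pow_right_mono₀ n2_pos ((Finset.card_le_card fun x hx => ?_).trans this.le)
    obtain ⟨h1, h2⟩ := Finset.mem_filter.1 hx
    exact Finset.mem_Icc.mpr ⟨(Finset.mem_filter.1 h1).2.one_lt.le, h2⟩
  · refine le_trans ?_ (primorial_le_four_pow (2 * n / 3))
    refine (Finset.prod_le_prod' fun p hp => (?_ : f p ≤ p)).trans ?_
    · obtain ⟨h1, h2⟩ := Finset.mem_filter.1 hp
      refine (pow_right_mono₀ (Finset.mem_filter.1 h1).2.one_lt.le ?_).trans (pow_one p).le
      exact Nat.factorization_choose_le_one (sqrt_lt'.mp <| not_le.1 h2)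
    refine Finset.prod_le_prod_of_subset_of_one_le' (Finset.filter_subset _ _) ?_
    exact fun p hp _ => (Finset.mem_filter.1 hp).2.one_lt.le

theorem bertrand2 (n q : ℕ) (n_large : 512 ≤ n) (hq : n < q) :
    ∃ p : ℕ, p.Prime ∧ n < p ∧ p ≤ 2 * n ∧ p ≠ q := by
  by_contra hcon
  push Not at hcon
  have no_prime : 4 ^ n < n * n.centralBinom :=
    Nat.four_pow_lt_mul_centralBinom n (le_trans (by norm_num1) n_large)
  have h1 := cb_le2 n q (by omega) hq (fun p hp h1 h2 => by
    by_contra h3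
    exact h2 (hcon p hp h1 (by omega)))
  have h2 := nat_main2 n_large
  have h3 := Nat.mul_le_mul_left n h1
  have h4 : n * (2 * n * ((2 * n) ^ sqrt (2 * n) * 4 ^ (2 * n / 3))) =
    (n * (2 * n)) * (2 * n) ^ sqrt (2 * n) * 4 ^ (2 * n / 3) := by
    simp only [Nat.mul_assoc]
  omega
end


structure GP (A B : Finset ℕ) (m k X : ℕ) : Prop where
  hA : ∀ x ∈ A, IsPrimePow x
  hB : ∀ x ∈ B, IsPrimePow x
  cA : (A : Set ℕ).Pairwise Nat.Coprime
  cB : (B : Set ℕ).Pairwise Nat.Coprime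
  cAB : ∀ x ∈ A, ∀ y ∈ B, Nat.Coprime x y
  odd : ∀ y ∈ B, Nat.Coprime 2 y
  bA : ∀ x ∈ A, ∀ r : ℕ, r.Prime → X ≤ r → Nat.Coprime r x
  bB : ∀ x ∈ B, ∀ r : ℕ, r.Prime → X ≤ r → Nat.Coprime r x
  sA : ∑ x ∈ A, x ≤ m
  sA' : m ≤ ∑ x ∈ A, x + 2
  sB : ∑ x ∈ B, x ≤ k
  sB' : k ≤ ∑ x ∈ B, x + 1

theorem GP.mono {A B m k X Y} (h : GP A B m k X) (hXY : X ≤ Y) : GP A B m k Y :=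
  { h with
    bA := fun x hx r hr hY => h.bA x hx r hr (hXY.trans hY)
    bB := fun x hx r hr hY => h.bB x hx r hr (hXY.trans hY) }

theorem not_mem_of_cop {A : Finset ℕ} {p : ℕ} (hp : p.Prime) (h : ∀ x ∈ A, Nat.Coprime p x) :
    p ∉ A := fun hm => by
  have := h p hm
  rw [Nat.coprime_self] at this
  exact hp.one_lt.ne' this

theorem pw_insert {A : Finset ℕ} {p : ℕ} (hA : (A : Set ℕ).Pairwise Nat.Coprime)
    (h : ∀ x ∈ A, Nat.Coprime p x) : ((insert p A : Finset ℕ) : Set ℕ).Pairwise Nat.Coprime := by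
  rw [Finset.coe_insert, Set.pairwise_insert]
  exact ⟨hA, fun b hb _ => ⟨h b hb, (h b hb).symm⟩⟩

theorem GP.addA {A B m k p q} (h : GP A B m k p) (hp : p.Prime) (hpq : p < q) :
    GP (insert p A) B (m + p) k q := by
  have hc : ∀ x ∈ A, Nat.Coprime p x := fun x hx => h.bA x hx p hp le_rfl
  have hcB : ∀ x ∈ B, Nat.Coprime p x := fun x hx => h.bB x hx p hp le_rfl
  have hn := not_mem_of_cop hp hc
  have h' := h.mono hpq.le
  refine { h' with hA := ?_, cA := pw_insert h.cA hc, cAB := ?_, bA := ?_, sA := ?_, sA' := ?_ }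
  · intro x hx
    rcases Finset.mem_insert.1 hx with rfl | hx
    · exact hp.isPrimePow
    · exact h.hA x hx
  · intro x hx
    rcases Finset.mem_insert.1 hx with rfl | hx
    · exact hcB
    · exact h.cAB x hx
  · intro x hx r hr hqr
    rcases Finset.mem_insert.1 hx with rfl | hx
    · exact (Nat.coprime_primes hr hp).2 (by omega)
    · exact h'.bA x hx r hr hqr
  · rw [Finset.sum_insert hn]; have := h.sA; omega
  · rw [Finset.sum_insert hn]; have := h.sA'; omega

theorem GP.addB {A B m k p q} (h : GP A B m k p) (hp : p.Prime) (hp2 : p ≠ 2) (hpq : p < q) :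
    GP A (insert p B) m (k + p) q := by
  have hc : ∀ x ∈ B, Nat.Coprime p x := fun x hx => h.bB x hx p hp le_rfl
  have hcA : ∀ x ∈ A, Nat.Coprime p x := fun x hx => h.bA x hx p hp le_rfl
  have hn := not_mem_of_cop hp hc
  have h' := h.mono hpq.le
  refine { h' with hB := ?_, cB := pw_insert h.cB hc, cAB := ?_, odd := ?_, bB := ?_, sB := ?_, sB' := ?_ }
  · intro x hx
    rcases Finset.mem_insert.1 hx with rfl | hx
    · exact hp.isPrimePow
    · exact h.hB x hx
  · intro x hx y hy
    rcases Finset.mem_insert.1 hy with rfl | hy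
    · exact (hcA x hx).symm
    · exact h.cAB x hx y hy
  · intro x hx
    rcases Finset.mem_insert.1 hx with rfl | hx
    · exact (Nat.coprime_primes Nat.prime_two hp).2 hp2.symm
    · exact h.odd x hx
  · intro x hx r hr hqr
    rcases Finset.mem_insert.1 hx with rfl | hx
    · exact (Nat.coprime_primes hr hp).2 (by omega)
    · exact h'.bB x hx r hr hqr
  · rw [Finset.sum_insert hn]; have := h.sB; omega
  · rw [Finset.sum_insert hn]; have := h.sB'; omega

def St (p q : ℕ) : Prop :=
  (∀ m k, m < q → 13 ≤ k → k < 13 + p → ∃ A B, GP A B m k p) ∧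
  (∀ m k, m < p → 13 ≤ k → k < 13 + q → ∃ A B, GP A B m k p)

theorem St.step {p q r : ℕ} (h : St p q) (hp : p.Prime) (hp2 : p ≠ 2) (hpq : p < q)
    (hr : r ≤ 2 * p) : St q r := by
  refine ⟨fun m k hm hk1 hk2 => ?_, fun m k hm hk1 hk2 => ?_⟩
  · by_cases hmp : m < p
    · obtain ⟨A, B, g⟩ := h.2 m k hmp hk1 hk2
      exact ⟨A, B, g.mono hpq.le⟩
    · obtain ⟨A, B, g⟩ := h.2 (m - p) k (by omega) hk1 hk2
      have := g.addA hp hpq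
      rw [Nat.sub_add_cancel (by omega)] at this
      exact ⟨_, _, this⟩
  · by_cases hmp : k < 13 + p
    · obtain ⟨A, B, g⟩ := h.1 m k hm hk1 hmp
      exact ⟨A, B, g.mono hpq.le⟩
    · obtain ⟨A, B, g⟩ := h.1 m (k - p) hm (by omega) (by omega)
      have := g.addB hp hp2 hpq
      rw [Nat.sub_add_cancel (by omega)] at this
      exact ⟨_, _, this⟩

theorem ipp (p k : ℕ) (hp : p.Prime) (hk : 0 < k) : IsPrimePow (p ^ k) := 
  (isPrimePow_nat_iff _).2 ⟨p, k, hp, hk, rfl⟩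

def UA : Finset ℕ := {2, 4, 8, 16, 7, 11}
def UB : Finset ℕ := {3, 9, 27, 5, 25, 13, 17, 19}
def LA : List (Finset ℕ) := [{}, {2}, {4}, {7}, {8}, {11}, {2, 11}, {16}, {8, 11}, {2, 7, 11}, {16, 7}, {8, 7, 11}]
def LB : List (Finset ℕ) := [{13}, {9, 5}, {3, 13}, {17}, {19}, {3, 17}, {5, 17}, {5, 19}, {25}, {27}, {3, 25}, {13, 17}, {13, 19}, {9, 25}, {17, 19}, {25, 13}, {27, 13}]

theorem ppUA : ∀ x ∈ UA, IsPrimePow x := by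
  intro x hx
  simp only [UA, Finset.mem_insert, Finset.mem_singleton] at hx
  rcases hx with rfl | rfl | rfl | rfl | rfl | rfl
  · exact ipp 2 1 (by norm_num) (by norm_num)
  · exact ipp 2 2 (by norm_num) (by norm_num)
  · exact ipp 2 3 (by norm_num) (by norm_num)
  · exact ipp 2 4 (by norm_num) (by norm_num)
  · exact ipp 7 1 (by norm_num) (by norm_num)
  · exact ipp 11 1 (by norm_num) (by norm_num)

theorem ppUB : ∀ x ∈ UB, IsPrimePow x := by
  intro x hx
  simp only [UB, Finset.mem_insert, Finset.mem_singleton] at hx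
  rcases hx with rfl | rfl | rfl | rfl | rfl | rfl | rfl | rfl
  · exact ipp 3 1 (by norm_num) (by norm_num)
  · exact ipp 3 2 (by norm_num) (by norm_num)
  · exact ipp 3 3 (by norm_num) (by norm_num)
  · exact ipp 5 1 (by norm_num) (by norm_num)
  · exact ipp 5 2 (by norm_num) (by norm_num)
  · exact ipp 13 1 (by norm_num) (by norm_num)
  · exact ipp 17 1 (by norm_num) (by norm_num)
  · exact ipp 19 1 (by norm_num) (by norm_num)

theorem copU : ∀ x ∈ UA, ∀ y ∈ UB, Nat.Coprime x y := by decide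
theorem oddU : ∀ y ∈ UB, Nat.Coprime 2 y := by decide
theorem bU : ∀ x ∈ UA ∪ UB, ∀ r : ℕ, r.Prime → 23 ≤ r → Nat.Coprime r x := by
  intro x hx r hr hr2
  have key : ∀ x ∈ UA ∪ UB, x ∣ (16 * 7 * 11 * 27 * 25 * 13 * 17 * 19) := by decide
  have h2 : Nat.Coprime r (16 * 7 * 11 * 27 * 25 * 13 * 17 * 19) := by
    have e : (16 * 7 * 11 * 27 * 25 * 13 * 17 * 19) = 2 ^ 4 * 7 * 11 * 3 ^ 3 * 5 ^ 2 * 13 * 17 * 19 := by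
      norm_num
    rw [e]
    have c : ∀ s : ℕ, s.Prime → s < 23 → Nat.Coprime r s := fun s hs h =>
      (Nat.coprime_primes hr hs).2 (by omega)
    refine Nat.Coprime.mul_right (Nat.Coprime.mul_right (Nat.Coprime.mul_right (Nat.Coprime.mul_right
      (Nat.Coprime.mul_right (Nat.Coprime.mul_right (Nat.Coprime.mul_right (Nat.Coprime.pow_right _ ?_) ?_) ?_)
      (Nat.Coprime.pow_right _ ?_)) (Nat.Coprime.pow_right _ ?_)) ?_) ?_) ?_
    all_goals exact c _ (by norm_num) (by norm_num)
  exact Nat.Coprime.coprime_dvd_right (key x hx) h2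

theorem LAok : ∀ S ∈ LA, S ⊆ UA ∧ ∀ x ∈ S, ∀ y ∈ S, x ≠ y → Nat.Coprime x y := by decide
theorem LBok : ∀ S ∈ LB, S ⊆ UB ∧ ∀ x ∈ S, ∀ y ∈ S, x ≠ y → Nat.Coprime x y := by decide
theorem LAcov : ∀ m < 29, ∃ S ∈ LA, ∑ x ∈ S, x ≤ m ∧ m ≤ ∑ x ∈ S, x + 2 := by decide
theorem LBcov : ∀ k < 42, 13 ≤ k → ∃ S ∈ LB, ∑ x ∈ S, x ≤ k ∧ k ≤ ∑ x ∈ S, x + 1 := by decide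

theorem base0 : ∀ m k, m < 29 → 13 ≤ k → k < 42 → ∃ A B, GP A B m k 23 := by
  intro m k hm hk1 hk2
  obtain ⟨A, hA, a1, a2⟩ := LAcov m hm
  obtain ⟨B, hB, b1, b2⟩ := LBcov k hk2 hk1
  obtain ⟨hA1, hA2⟩ := LAok A hA
  obtain ⟨hB1, hB2⟩ := LBok B hB
  exact ⟨A, B, fun x hx => ppUA x (hA1 hx), fun x hx => ppUB x (hB1 hx),
    fun x hx y hy h => hA2 x hx y hy h, fun x hx y hy h => hB2 x hx y hy h,
    fun x hx y hy => copU x (hA1 hx) y (hB1 hy), fun x hx => oddU x (hB1 hx),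
    fun x hx => bU x (Finset.mem_union_left _ (hA1 hx)),
    fun x hx => bU x (Finset.mem_union_right _ (hB1 hx)), a1, a2, b1, b2⟩

theorem St0 : St 23 29 :=
  ⟨fun m k h1 h2 h3 => base0 m k h1 h2 (by omega), fun m k h1 h2 h3 => base0 m k (by omega) h2 (by omega)⟩

theorem St1 : St 557 563 := by
  have h1 : St 29 43 := St0.step (by norm_num) (by norm_num) (by norm_num) (by norm_num)
  have h2 : St 43 53 := h1.step (by norm_num) (by norm_num) (by norm_num) (by norm_num)
  have h3 : St 53 83 := h2.step (by norm_num) (by norm_num) (by norm_num) (by norm_num)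
  have h4 : St 83 103 := h3.step (by norm_num) (by norm_num) (by norm_num) (by norm_num)
  have h5 : St 103 163 := h4.step (by norm_num) (by norm_num) (by norm_num) (by norm_num)
  have h6 : St 163 199 := h5.step (by norm_num) (by norm_num) (by norm_num) (by norm_num)
  have h7 : St 199 317 := h6.step (by norm_num) (by norm_num) (by norm_num) (by norm_num)
  have h8 : St 317 397 := h7.step (by norm_num) (by norm_num) (by norm_num) (by norm_num)
  have h9 : St 397 557 := h8.step (by norm_num) (by norm_num) (by norm_num) (by norm_num)
  exact h9.step (by norm_num) (by norm_num) (by norm_num) (by norm_num)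

theorem St_all (N : ℕ) : ∃ p q, N ≤ p ∧ 512 ≤ p ∧ p.Prime ∧ q.Prime ∧ p < q ∧
    (∀ s : ℕ, s.Prime → p < s → q ≤ s) ∧ St p q := by
  induction N with
  | zero =>
    refine ⟨557, 563, by norm_num, by norm_num, by norm_num, by norm_num, by norm_num, ?_, St1⟩
    intro s hs h
    by_contra hc
    have : s < 563 := by omega
    interval_cases s <;> revert hs <;> norm_num
  | succ N ih =>
    obtain ⟨p, q, h1, h2, hp, hq, hpq, hmin, hst⟩ := ih
    obtain ⟨t, ht, ht1, ht2, htq⟩ := bertrand2 p q h2 hpq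
    have hqt := hmin t ht ht1
    have hex : ∃ r : ℕ, r.Prime ∧ q < r := ⟨t, ht, by omega⟩
    classical
    have hs := Nat.find_spec hex
    have hle : Nat.find hex ≤ t := Nat.find_min' hex ⟨ht, by omega⟩
    exact ⟨q, Nat.find hex, by omega, by omega, hq, hs.1, hs.2,
      fun s hs h => Nat.find_min' hex ⟨hs, h⟩, hst.step hp (by omega) hpq (by omega)⟩

theorem exists_GP (n : ℕ) (hn : 13 ≤ n) : ∃ A B X, GP A B n n X := by
  obtain ⟨p, q, h1, -, -, -, hpq, -, h⟩ := St_all (n + 1)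
  obtain ⟨A, B, g⟩ := h.1 n n (by omega) hn (by omega)
  exact ⟨A, B, p, g⟩

theorem exists_GP' (n : ℕ) (hn : 4 ≤ n) (h₁ : ¬ n.Prime) (h₂ : ¬ (n - 1).Prime) :
    ∃ A B X, GP A B n n X := by
  by_cases h : 13 ≤ n
  · exact exists_GP n h
  have : n = 9 ∨ n = 10 := by
    interval_cases n <;> revert h₁ h₂ <;> norm_num
  have bd : ∀ x, x ≠ 0 ∧ x < 11 → ∀ r : ℕ, r.Prime → 11 ≤ r → Nat.Coprime r x := by
    intro x hx r hr h
    rw [hr.coprime_iff_not_dvd]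
    intro hd
    have := Nat.le_of_dvd (by omega) hd
    omega
  have pp : ∀ x, x = 3 ∨ x = 4 ∨ x = 5 ∨ x = 7 ∨ x = 8 ∨ x = 9 → IsPrimePow x := by
    rintro x (rfl | rfl | rfl | rfl | rfl | rfl)
    · exact ipp 3 1 (by norm_num) (by norm_num)
    · exact ipp 2 2 (by norm_num) (by norm_num)
    · exact ipp 5 1 (by norm_num) (by norm_num)
    · exact ipp 7 1 (by norm_num) (by norm_num)
    · exact ipp 2 3 (by norm_num) (by norm_num)
    · exact ipp 3 2 (by norm_num) (by norm_num)
  have mk : ∀ (A B : Finset ℕ) (k : ℕ),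
      (∀ x ∈ A ∪ B, (x = 3 ∨ x = 4 ∨ x = 5 ∨ x = 7 ∨ x = 8 ∨ x = 9)) →
      (∀ x ∈ A, ∀ y ∈ A, x ≠ y → Nat.Coprime x y) → (∀ x ∈ B, ∀ y ∈ B, x ≠ y → Nat.Coprime x y) →
      (∀ x ∈ A, ∀ y ∈ B, Nat.Coprime x y) → (∀ y ∈ B, Nat.Coprime 2 y) →
      (∑ x ∈ A, x ≤ k ∧ k ≤ ∑ x ∈ A, x + 2 ∧ ∑ x ∈ B, x ≤ k ∧ k ≤ ∑ x ∈ B, x + 1) →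
      GP A B k k 11 := by
    intro A B k h1 h2 h3 h4 h5 h6
    have hA : ∀ x ∈ A, _ := fun x hx => h1 x (Finset.mem_union_left _ hx)
    have hB : ∀ x ∈ B, _ := fun x hx => h1 x (Finset.mem_union_right _ hx)
    exact ⟨fun x hx => pp x (hA x hx), fun x hx => pp x (hB x hx),
      fun x hx y hy h => h2 x hx y hy h, fun x hx y hy h => h3 x hx y hy h, h4, h5,
      fun x hx => bd x (by have := hA x hx; omega), fun x hx => bd x (by have := hB x hx; omega),
      h6.1, h6.2.1, h6.2.2.1, h6.2.2.2⟩
  rcases this with rfl | rfl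
  · exact ⟨{8}, {9}, 11, mk _ _ _ (by decide) (by decide) (by decide) (by decide) (by decide) (by decide)⟩
  · exact ⟨{5, 4}, {7, 3}, 11, mk _ _ _ (by decide) (by decide) (by decide) (by decide) (by decide) (by decide)⟩

theorem sum_le_prod_aux (T : Finset ℕ) (h : ∀ x ∈ T, 2 ≤ x) :
    (∑ x ∈ T, x = 0 ∧ ∏ x ∈ T, x = 1) ∨ (∑ x ∈ T, x ≤ ∏ x ∈ T, x ∧ 2 ≤ ∏ x ∈ T, x) := by
  induction T using Finset.induction_on with
  | empty => left; simp
  | insert a s ha ih =>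
    right
    rw [Finset.sum_insert ha, Finset.prod_insert ha]
    have h2 := h a (Finset.mem_insert_self _ _)
    rcases ih (fun x hx => h x (Finset.mem_insert_of_mem hx)) with ⟨h3, h4⟩ | ⟨h3, h4⟩
    · rw [h3, h4]; omega
    · constructor <;> nlinarith

theorem sum_le_of_dvd (T : Finset ℕ) (x : ℕ) (hx : 0 < x) (h : ∀ t ∈ T, 2 ≤ t)
    (hc : (T : Set ℕ).Pairwise Nat.Coprime) (hd : ∀ t ∈ T, t ∣ x) : ∑ t ∈ T, t ≤ x := by
  have h1 : ∏ t ∈ T, t ∣ x := by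
    refine Finset.prod_dvd_of_isRelPrime (fun a ha b hb hab => ?_) hd
    exact Nat.coprime_iff_isRelPrime.1 (hc ha hb hab)
  have h2 := Nat.le_of_dvd hx h1
  rcases sum_le_prod_aux T h with h | h <;> omega

theorem pp_dvd_lcm {t a b : ℕ} (ht : IsPrimePow t) (ha : a ≠ 0) (hb : b ≠ 0) (h : t ∣ Nat.lcm a b) :
    t ∣ a ∨ t ∣ b := by
  obtain ⟨p, k, hp, hk, rfl⟩ := (isPrimePow_nat_iff _).1 ht
  rw [hp.pow_dvd_iff_le_factorization (Nat.lcm_ne_zero ha hb), Nat.factorization_lcm ha hb] at h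
  rw [hp.pow_dvd_iff_le_factorization ha, hp.pow_dvd_iff_le_factorization hb]
  simpa using h

theorem sum_le_lcm (c : Multiset ℕ) : (∀ x ∈ c, 0 < x) → ∀ T : Finset ℕ, (∀ t ∈ T, IsPrimePow t) →
    (T : Set ℕ).Pairwise Nat.Coprime → (∀ t ∈ T, t ∣ c.lcm) → ∑ t ∈ T, t ≤ c.sum := by
  induction c using Multiset.induction_on with
  | empty =>
    intro _ T hT _ hd
    have : T = ∅ := by
      rw [Finset.eq_empty_iff_forall_notMem]
      intro t ht
      have := hd t ht
      have := (hT t ht).one_lt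
      simp_all
    simp [this]
  | cons x c ih =>
    intro hc T hT hp hd
    have hx : 0 < x := hc x (Multiset.mem_cons_self _ _)
    have hc' : ∀ y ∈ c, 0 < y := fun y hy => hc y (Multiset.mem_cons_of_mem hy)
    have hl : c.lcm ≠ 0 := by
      rw [Ne, Multiset.lcm_eq_zero_iff]
      intro h
      exact absurd (hc' 0 h) (by omega)
    rw [Multiset.sum_cons, ← Finset.sum_filter_add_sum_filter_not T (fun t => t ∣ x)]
    have sub1 : ((T.filter (fun t => t ∣ x) : Finset ℕ) : Set ℕ) ⊆ T := Finset.coe_subset.2 (Finset.filter_subset _ _)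
    have sub2 : ((T.filter (fun t => ¬ t ∣ x) : Finset ℕ) : Set ℕ) ⊆ T := Finset.coe_subset.2 (Finset.filter_subset _ _)
    apply Nat.add_le_add
    · exact sum_le_of_dvd _ x hx (fun t ht => (hT t (Finset.mem_filter.1 ht).1).two_le)
        (hp.mono sub1) (fun t ht => (Finset.mem_filter.1 ht).2)
    · refine ih hc' _ (fun t ht => hT t (Finset.mem_filter.1 ht).1) (hp.mono sub2) (fun t ht => ?_)
      obtain ⟨h1, h2⟩ := Finset.mem_filter.1 ht
      have h3 := hd t h1
      rw [Multiset.lcm_cons] at h3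
      exact (pp_dvd_lcm (hT t h1) hx.ne' hl h3).resolve_left h2

theorem key_le {n : ℕ} (w : Equiv.Perm (Fin n)) (T : Finset ℕ) (hT : ∀ t ∈ T, IsPrimePow t)
    (hc : (T : Set ℕ).Pairwise Nat.Coprime) (hd : ∀ t ∈ T, t ∣ orderOf w) : ∑ t ∈ T, t ≤ n := by
  have h1 := sum_le_lcm w.cycleType (fun x hx => by
    have := Equiv.Perm.two_le_of_mem_cycleType hx; omega) T hT hc
    (by rwa [Equiv.Perm.lcm_cycleType])
  have h2 := Equiv.Perm.sum_cycleType_le w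
  rw [Fintype.card_fin] at h2
  omega

theorem exists_order {n : ℕ} (T : Finset ℕ) (hT : ∀ t ∈ T, 2 ≤ t) (hs : ∑ t ∈ T, t ≤ n) :
    ∃ w : Equiv.Perm (Fin n), orderOf w = T.lcm id := by
  obtain ⟨w, hw⟩ := (Equiv.Perm.exists_with_cycleType_iff (Fin n) (m := T.val)).2
    ⟨by rw [Finset.sum_val, Fintype.card_fin]; exact hs, fun a ha => hT a ha⟩
  refine ⟨w, ?_⟩
  rw [← Equiv.Perm.lcm_cycleType, hw, Finset.lcm_def, Multiset.map_id]

/-- commuting of orders -/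
def CO (n a b : ℕ) : Prop := ∃ u v : Equiv.Perm (Fin n), orderOf u = a ∧ orderOf v = b ∧ Commute u v

theorem CO.of_dvd {n : ℕ} (w : Equiv.Perm (Fin n)) {a b : ℕ} (ha : a ∣ orderOf w) (hb : b ∣ orderOf w) :
    CO n a b := by
  have h0 : orderOf w ≠ 0 := (orderOf_pos w).ne'
  exact ⟨_, _, orderOf_pow_orderOf_div h0 ha, orderOf_pow_orderOf_div h0 hb, Commute.pow_pow_self w _ _⟩

theorem CO.primes {n p q : ℕ} (hp : p.Prime) (hq : q.Prime) (h : p + q ≤ n ∨ (p = q ∧ p ≤ n)) : CO n p q := by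
  by_cases hpq : p = q
  · subst hpq
    obtain ⟨w, hw⟩ := exists_order (n := n) {p} (by simp [hp.two_le]) (by rw [Finset.sum_singleton]; omega)
    have : p ∣ orderOf w := by rw [hw]; simp
    exact CO.of_dvd w this this
  · obtain ⟨w, hw⟩ := exists_order (n := n) {p, q} (by simp [hp.two_le, hq.two_le])
      (by rw [Finset.sum_pair hpq]; omega)
    have h1 : p ∣ orderOf w := by rw [hw]; exact Finset.dvd_lcm (f := id) (by simp)
    have h2 : q ∣ orderOf w := by rw [hw]; exact Finset.dvd_lcm (f := id) (by simp)
    exact CO.of_dvd w h1 h2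

theorem CO.right_dvd {n a b c : ℕ} (h : CO n a b) (hc : c ∣ b) : CO n a c := by
  obtain ⟨u, v, rfl, rfl, huv⟩ := h
  exact ⟨u, _, rfl, orderOf_pow_orderOf_div (orderOf_pos v).ne' hc, huv.pow_right _⟩

theorem CO.mul {n a b : ℕ} (h : CO n a b) (hc : Nat.Coprime a b) : ∃ w : Equiv.Perm (Fin n), orderOf w = a * b := by
  obtain ⟨u, v, rfl, rfl, huv⟩ := h
  exact ⟨u * v, huv.orderOf_mul_eq_mul_orderOf_of_coprime hc⟩

theorem CO.symm {n a b : ℕ} (h : CO n a b) : CO n b a := by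
  obtain ⟨u, v, h1, h2, h3⟩ := h
  exact ⟨v, u, h2, h1, h3.symm⟩

/-- prime orders are at most `n`, and composite orders have min prime factor at most `n/2`. -/
theorem prime_le {n p : ℕ} (x : Equiv.Perm (Fin n)) (hp : p.Prime) (h : p ∣ orderOf x) : p ≤ n := by
  have := key_le x {p} (by simp [hp.isPrimePow]) (by simp) (by simpa using h)
  simpa using this

theorem comp_le {n : ℕ} (x : Equiv.Perm (Fin n)) (hx : x ≠ 1) (h : ¬ (orderOf x).Prime) :
    2 * (orderOf x).minFac ≤ n := by
  have h2 := Equiv.Perm.sum_cycleType_le x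
  rw [Fintype.card_fin] at h2
  have ho : orderOf x ≠ 1 := by rwa [Ne, orderOf_eq_one_iff]
  have hmin : ∀ c ∈ x.cycleType, (orderOf x).minFac ≤ c := fun c hc =>
    Nat.minFac_le_of_dvd (Equiv.Perm.two_le_of_mem_cycleType hc) (Equiv.Perm.dvd_of_mem_cycleType hc)
  have h3 := Multiset.card_nsmul_le_sum hmin
  rw [smul_eq_mul] at h3
  by_cases hc : 2 ≤ x.cycleType.card
  · nlinarith
  have hc0 : x.cycleType.card ≠ 0 := by
    rw [Ne, Equiv.Perm.card_cycleType_eq_zero]; exact hx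
  obtain ⟨c, hcc⟩ := Multiset.card_eq_one.1 (show x.cycleType.card = 1 by omega)
  have ho2 : orderOf x = c := by
    rw [← Equiv.Perm.lcm_cycleType, hcc]; simp
  rw [hcc, Multiset.sum_singleton] at h2
  have h4 := Nat.minFac_sq_le_self (orderOf_pos x) h
  have h5 := (Nat.minFac_prime ho).two_le
  nlinarith

theorem CO.sum_le {n q : ℕ} {A : Finset ℕ} (hA : ∀ x ∈ A, IsPrimePow x)
    (cA : (A : Set ℕ).Pairwise Nat.Coprime) (hq : q.Prime) (h : CO n (A.lcm id) q) :
    q ∣ A.lcm id ∨ ∑ x ∈ A, x + q ≤ n := by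
  by_cases hd : q ∣ A.lcm id
  · exact Or.inl hd
  right
  have hcop := (hq.coprime_iff_not_dvd).2 hd
  obtain ⟨w, hw⟩ := h.mul hcop.symm
  have hdv : ∀ x ∈ A, x ∣ A.lcm id := fun x hx => Finset.dvd_lcm (f := id) hx
  have hc : ∀ x ∈ A, Nat.Coprime q x := fun x hx => Nat.Coprime.coprime_dvd_right (hdv x hx) hcop
  have hn := not_mem_of_cop hq hc
  have := key_le w (insert q A) (by
      intro t ht
      rcases Finset.mem_insert.1 ht with rfl | ht
      · exact hq.isPrimePow
      · exact hA t ht) (pw_insert cA hc) (by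
      intro t ht
      rw [hw]
      rcases Finset.mem_insert.1 ht with rfl | ht
      · exact Dvd.intro_left _ rfl
      · exact Dvd.dvd.mul_right (hdv t ht) _)
  rw [Finset.sum_insert hn] at this
  omega

theorem far {n : ℕ} {A B : Finset ℕ} {X : ℕ} (g : GP A B n n X) {c : ℕ} (hc : c ≠ 1)
    (h1 : CO n (A.lcm id) c) (h2 : CO n (B.lcm id) c) : False := by
  have hq := Nat.minFac_prime hc
  set q := c.minFac with hqd
  have d1 := (h1.right_dvd (Nat.minFac_dvd c)).sum_le g.hA g.cA hq
  have d2 := (h2.right_dvd (Nat.minFac_dvd c)).sum_le g.hB g.cB hq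
  have ex : ∀ S : Finset ℕ, q ∣ S.lcm id → ∃ x ∈ S, q ∣ x := by
    intro S h
    have h' := h.trans (Finset.lcm_dvd_prod S id)
    obtain ⟨x, hx, hd⟩ := (Prime.dvd_finsetProd_iff hq.prime _).1 h'
    exact ⟨x, hx, hd⟩
  have hb : q ∣ B.lcm id := by
    rcases d2 with h | h
    · exact h
    · have := g.sB'; have := hq.two_le; omega
  obtain ⟨y, hy, hqy⟩ := ex B hb
  have hq2 : q ≠ 2 := by
    intro h
    have h3 := g.odd y hy
    rw [Nat.prime_two.coprime_iff_not_dvd] at h3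
    exact h3 (h ▸ hqy)
  rcases d1 with h | h
  · obtain ⟨x, hx, hqx⟩ := ex A h
    exact Nat.Prime.not_coprime_iff_dvd.2 ⟨q, hq, hqx, hqy⟩ (g.cAB x hx y hy)
  · have := g.sA'; have := hq.two_le; omega

theorem lcm_ne_one {S : Finset ℕ} (h : ∀ x ∈ S, IsPrimePow x) (hs : ∑ x ∈ S, x ≠ 0) :
    S.lcm id ≠ 1 := by
  intro h1
  obtain ⟨x, hx, -⟩ := Finset.exists_ne_zero_of_sum_ne_zero hs
  have h2 : x ∣ S.lcm id := Finset.dvd_lcm (f := id) hx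
  rw [h1, Nat.dvd_one] at h2
  exact (h x hx).one_lt.ne' h2

theorem walk_of_CO {n : ℕ} {x y : {x : Equiv.Perm (Fin n) // x ≠ 1}}
    (h : CO n (orderOf (x : Equiv.Perm (Fin n))) (orderOf (y : Equiv.Perm (Fin n)))) :
    ∃ p : (reducedOrderSuperCommutingGraph n).Walk x y, p.length ≤ 1 := by
  by_cases hxy : x = y
  · subst hxy; exact ⟨SimpleGraph.Walk.nil, by simp⟩
  · have : (reducedOrderSuperCommutingGraph n).Adj x y := ⟨hxy, h⟩
    exact ⟨this.toWalk, by simp⟩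

theorem CO.refl {n : ℕ} (x : Equiv.Perm (Fin n)) : CO n (orderOf x) (orderOf x) :=
  ⟨x, x, rfl, rfl, Commute.refl x⟩

theorem CO_of_walk {n : ℕ} {x y : {x : Equiv.Perm (Fin n) // x ≠ 1}}
    (p : (reducedOrderSuperCommutingGraph n).Walk x y) (hp : p.length ≤ 2) :
    ∃ z : {x : Equiv.Perm (Fin n) // x ≠ 1},
      CO n (orderOf (x : Equiv.Perm (Fin n))) (orderOf (z : Equiv.Perm (Fin n))) ∧
      CO n (orderOf (y : Equiv.Perm (Fin n))) (orderOf (z : Equiv.Perm (Fin n))) := by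
  cases p with
  | nil => exact ⟨x, CO.refl _, CO.refl _⟩
  | cons h p =>
    cases p with
    | nil => exact ⟨y, h.2, CO.refl _⟩
    | cons h' p =>
      cases p with
      | nil => exact ⟨_, h.2, CO.symm h'.2⟩
      | cons h'' p => simp at hp

theorem walk3 {n : ℕ} (hn : 4 ≤ n) (h₁ : ¬ n.Prime) (h₂ : ¬ (n - 1).Prime)
    (x y : {x : Equiv.Perm (Fin n) // x ≠ 1}) :
    ∃ p : (reducedOrderSuperCommutingGraph n).Walk x y, p.length ≤ 3 := by
  have ordne : ∀ x : {x : Equiv.Perm (Fin n) // x ≠ 1}, orderOf (x : Equiv.Perm (Fin n)) ≠ 1 := by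
    intro x; rw [Ne, orderOf_eq_one_iff]; exact x.2
  have le2 : ∀ p : ℕ, p.Prime → p ≤ n → p + 2 ≤ n := by
    intro p hp hle
    have a1 : p ≠ n := fun h => h₁ (h ▸ hp)
    have a2 : p ≠ n - 1 := fun h => h₂ (h ▸ hp)
    omega
  -- it suffices to find primes
  have main : ∀ p q : ℕ, p.Prime → q.Prime → CO n (orderOf (x : Equiv.Perm (Fin n))) p →
      CO n p q → CO n q (orderOf (y : Equiv.Perm (Fin n))) →
      ∃ p : (reducedOrderSuperCommutingGraph n).Walk x y, p.length ≤ 3 := by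
    intro p q hp hq c1 c2 c3
    obtain ⟨u, v, rfl, rfl, huv⟩ := id c2
    have hu : u ≠ 1 := by rintro rfl; rw [orderOf_one] at hp; exact Nat.not_prime_one hp
    have hv : v ≠ 1 := by rintro rfl; rw [orderOf_one] at hq; exact Nat.not_prime_one hq
    obtain ⟨p1, l1⟩ := walk_of_CO (x := x) (y := ⟨u, hu⟩) c1
    obtain ⟨p2, l2⟩ := walk_of_CO (x := ⟨u, hu⟩) (y := ⟨v, hv⟩) c2
    obtain ⟨p3, l3⟩ := walk_of_CO (x := ⟨v, hv⟩) (y := y) c3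
    refine ⟨(p1.append p2).append p3, ?_⟩
    rw [SimpleGraph.Walk.length_append, SimpleGraph.Walk.length_append]
    omega
  have px := Nat.minFac_prime (ordne x)
  have py := Nat.minFac_prime (ordne y)
  have dx := Nat.minFac_dvd (orderOf (x : Equiv.Perm (Fin n)))
  have dy := Nat.minFac_dvd (orderOf (y : Equiv.Perm (Fin n)))
  have lx := prime_le _ px dx
  have ly := prime_le _ py dy
  have cx := (CO.refl (x : Equiv.Perm (Fin n))).right_dvd dx
  have cy := ((CO.refl (y : Equiv.Perm (Fin n))).right_dvd dy).symm
  have to2 : ∀ p : ℕ, p.Prime → p ≤ n → CO n p 2 := fun p hp hle =>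
    CO.primes hp Nat.prime_two (Or.inl (le2 p hp hle))
  by_cases hx : (orderOf (x : Equiv.Perm (Fin n))).Prime
  · exact main 2 _ Nat.prime_two py (to2 _ hx (prime_le _ hx dvd_rfl)) (to2 _ py ly).symm cy
  by_cases hy : (orderOf (y : Equiv.Perm (Fin n))).Prime
  · exact main _ 2 px Nat.prime_two cx (to2 _ px lx) (to2 _ hy (prime_le _ hy dvd_rfl)).symm
  · have e1 := comp_le _ x.2 hx
    have e2 := comp_le _ y.2 hy
    exact main _ _ px py cx (CO.primes px py (Or.inl (by omega))) cy


/-- **Corollary 2.**  If `n ≥ 4` and neither `n` nor `n - 1` is prime, then the reduced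
order-super-commuting graph `Δᵒ(Sₙ)*` is connected of diameter exactly `3`. -/
theorem stmt11 (n : ℕ) (hn : 4 ≤ n) (h₁ : ¬ n.Prime) (h₂ : ¬ (n - 1).Prime) :
    (reducedOrderSuperCommutingGraph n).Connected ∧
      (reducedOrderSuperCommutingGraph n).diam = 3 := by
  obtain ⟨A, B, X, g⟩ := exists_GP' n hn h₁ h₂
  obtain ⟨x, hx⟩ := exists_order A (fun t ht => (g.hA t ht).two_le) g.sA
  obtain ⟨y, hy⟩ := exists_order B (fun t ht => (g.hB t ht).two_le) g.sB
  have hx1 : x ≠ 1 := by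
    rw [Ne, ← orderOf_eq_one_iff, hx]
    exact lcm_ne_one g.hA (by have := g.sA'; omega)
  have hy1 : y ≠ 1 := by
    rw [Ne, ← orderOf_eq_one_iff, hy]
    exact lcm_ne_one g.hB (by have := g.sB'; omega)
  have : Nonempty {x : Equiv.Perm (Fin n) // x ≠ 1} := ⟨⟨x, hx1⟩⟩
  have hcon : (reducedOrderSuperCommutingGraph n).Connected := by
    refine ⟨fun u v => ?_⟩
    obtain ⟨p, -⟩ := walk3 hn h₁ h₂ u v
    exact ⟨p⟩
  refine ⟨hcon, le_antisymm ?_ ?_⟩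
  · obtain ⟨u, v, huv⟩ := SimpleGraph.exists_dist_eq_diam (G := reducedOrderSuperCommutingGraph n)
    obtain ⟨p, hp⟩ := walk3 hn h₁ h₂ u v
    rw [← huv]
    exact (SimpleGraph.dist_le p).trans hp
  · have hd := SimpleGraph.dist_le_diam (SimpleGraph.connected_iff_ediam_ne_top.1 hcon)
      (u := ⟨x, hx1⟩) (v := ⟨y, hy1⟩)
    refine le_trans ?_ hd
    by_contra hlt
    obtain ⟨p, hp⟩ := hcon.exists_walk_length_eq_dist ⟨x, hx1⟩ ⟨y, hy1⟩
    obtain ⟨z, z1, z2⟩ := CO_of_walk p (by omega)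
    simp only [hx, hy] at z1 z2
    refine far g ?_ z1 z2
    rw [Ne, orderOf_eq_one_iff]
    exact z.2
end

section
/- Let n ≥ 4 be an integer such that neither n nor n−1 is a prime number. Then the reduced order-super-commuting graph Δᵒ(Sₙ)* has diameter 3 if and only if there exist nonempty disjoint sets T₁, T₂ of primes, all at most n, and positive integer exponents α_p (p ∈ T₁) and β_q (q ∈ T₂), such that M₁ := Σ_{p ∈ T₁} p^{α_p} ∈ {n−1, n}, M₂ := Σ_{q ∈ T₂} q^{β_q} ≤ n, and p + M₂ > n for every p ∈ T₁. -/
open Finset in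
def EE (m : ℕ) : ℕ := ∑ p ∈ m.primeFactors, p ^ m.factorization p

lemma EE_mul {a b : ℕ} (h : Nat.Coprime a b) : EE (a * b) = EE a + EE b := by
  unfold EE
  rw [h.primeFactors_mul, Finset.sum_union h.disjoint_primeFactors]
  congr 1
  · refine Finset.sum_congr rfl fun p hp => ?_
    rw [Nat.factorization_eq_of_coprime_left h (Nat.mem_primeFactors_iff_mem_primeFactorsList.1 hp)]
  · refine Finset.sum_congr rfl fun p hp => ?_
    rw [Nat.factorization_eq_of_coprime_right h (Nat.mem_primeFactors_iff_mem_primeFactorsList.1 hp)]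

lemma EE_pow {p k : ℕ} (hp : p.Prime) (hk : 0 < k) : EE (p ^ k) = p ^ k := by
  unfold EE
  rw [Nat.primeFactors_prime_pow hk.ne' hp]
  simp [hp.factorization]

lemma EE_prime {p : ℕ} (hp : p.Prime) : EE p = p := by
  simpa using EE_pow hp one_pos

lemma EE_one : EE 1 = 0 := by simp [EE]

lemma EE_mono {a b : ℕ} (hb : b ≠ 0) (h : a ∣ b) : EE a ≤ EE b := by
  unfold EE
  have ha : a ≠ 0 := fun h0 => hb (by simpa [h0] using h)
  calc _ ≤ ∑ p ∈ a.primeFactors, p ^ b.factorization p := by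
        refine Finset.sum_le_sum fun p hp => ?_
        exact Nat.pow_le_pow_right (Nat.prime_of_mem_primeFactors hp).pos
          ((Nat.factorization_le_iff_dvd ha hb).2 h p)
    _ ≤ _ := Finset.sum_le_sum_of_subset (Nat.primeFactors_mono h hb)

lemma EE_le {a : ℕ} : EE a ≤ a := by
  induction a using Nat.recOnPosPrimePosCoprime with
  | prime_pow p n hp hn => rw [EE_pow hp hn]
  | zero => simp [EE]
  | one => simp [EE]
  | coprime a b ha hb h iha ihb => rw [EE_mul h]; nlinarith

lemma EE_lcm {a b : ℕ} (ha : a ≠ 0) (hb : b ≠ 0) : EE (a.lcm b) ≤ EE a + EE b := by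
  unfold EE
  have hl : a.lcm b ≠ 0 := Nat.lcm_ne_zero ha hb
  have hs : (a.lcm b).primeFactors = a.primeFactors ∪ b.primeFactors := by
    rw [← Nat.support_factorization, Nat.factorization_lcm ha hb]
    exact Finsupp.support_sup _ _
  let f : ℕ → ℕ → ℕ := fun m p => if p ∈ m.primeFactors then p ^ m.factorization p else 0
  have hA : ∑ p ∈ a.primeFactors, p ^ a.factorization p
      = ∑ p ∈ a.primeFactors ∪ b.primeFactors, f a p := by
    simp only [f, ← Finset.sum_filter, Finset.filter_mem_eq_inter, Finset.union_inter_cancel_left]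
  have hB : ∑ p ∈ b.primeFactors, p ^ b.factorization p
      = ∑ p ∈ a.primeFactors ∪ b.primeFactors, f b p := by
    simp only [f, ← Finset.sum_filter, Finset.filter_mem_eq_inter, Finset.union_inter_cancel_right]
  rw [hA, hB, hs, ← Finset.sum_add_distrib]
  refine Finset.sum_le_sum fun p hp => ?_
  rw [Nat.factorization_lcm ha hb]
  simp only [Finsupp.sup_apply, f]
  have h0 : ∀ m : ℕ, p ∉ m.primeFactors → m.factorization p = 0 := fun m hm => by
    rwa [← Finsupp.notMem_support_iff, Nat.support_factorization]
  have hp' := Finset.mem_union.1 hp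
  rcases le_total (a.factorization p) (b.factorization p) with h | h
  · rw [sup_eq_right.2 h]
    by_cases h1 : p ∈ b.primeFactors
    · simp [h1]
    · have h2 : p ∈ a.primeFactors := by tauto
      simp [h1, h2, h0 b h1] at h ⊢
      exact Nat.one_le_iff_ne_zero.2 (pow_ne_zero _ (Nat.prime_of_mem_primeFactors h2).ne_zero)
  · rw [sup_eq_left.2 h]
    by_cases h1 : p ∈ a.primeFactors
    · simp [h1]
    · have h2 : p ∈ b.primeFactors := by tauto
      simp [h1, h2, h0 a h1] at h ⊢
      exact Nat.one_le_iff_ne_zero.2 (pow_ne_zero _ (Nat.prime_of_mem_primeFactors h2).ne_zero)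

lemma EE_mlcm (s : Multiset ℕ) (hs : ∀ a ∈ s, a ≠ 0) : s.lcm ≠ 0 ∧ EE s.lcm ≤ s.sum := by
  induction s using Multiset.induction with
  | empty => simp [EE]
  | cons a s ih =>
    obtain ⟨h1, h2⟩ := ih fun x hx => hs x (Multiset.mem_cons_of_mem hx)
    have ha := hs a (Multiset.mem_cons_self a s)
    rw [Multiset.lcm_cons, Multiset.sum_cons]
    exact ⟨Nat.lcm_ne_zero ha h1, (EE_lcm ha h1).trans (add_le_add EE_le h2)⟩

lemma EE_orderOf {n : ℕ} (g : Equiv.Perm (Fin n)) : EE (orderOf g) ≤ n := by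
  rw [← Equiv.Perm.lcm_cycleType]
  refine (EE_mlcm _ fun a ha => ?_).2.trans (by simpa using g.sum_cycleType_le)
  have := Equiv.Perm.two_le_of_mem_cycleType ha
  omega

lemma exists_orderOf {n m : ℕ} (hm : m ≠ 0) (h : EE m ≤ n) :
    ∃ g : Equiv.Perm (Fin n), orderOf g = m := by
  obtain ⟨g, hg⟩ := (Equiv.Perm.exists_with_cycleType_iff (Fin n)
    (m := m.primeFactors.val.map fun p => p ^ m.factorization p)).2 (by
      refine ⟨by simpa [EE] using h, ?_⟩
      intro a ha
      obtain ⟨p, hp, rfl⟩ := Multiset.mem_map.1 ha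
      have hp : p ∈ m.primeFactors := hp
      have h2 := (Nat.prime_of_mem_primeFactors hp).two_le
      have h3 : m.factorization p ≠ 0 := by
        rwa [← Finsupp.mem_support_iff, Nat.support_factorization]
      exact h2.trans (Nat.le_self_pow h3 p))
  refine ⟨g, ?_⟩
  rw [← Equiv.Perm.lcm_cycleType, hg]
  change m.primeFactors.lcm (fun p => p ^ m.factorization p) = m
  rw [Finset.lcm_eq_prod]
  · exact Nat.prod_factorization_pow_eq_self hm
  · intro p hp q hq hpq
    exact Nat.Coprime.pow _ _ ((Nat.coprime_primes (Nat.prime_of_mem_primeFactors hp)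
      (Nat.prime_of_mem_primeFactors hq)).2 hpq)

lemma edist_le_one_iff' {n : ℕ} (x y : {x : Equiv.Perm (Fin n) // x ≠ 1}) :
    (reducedOrderSuperCommutingGraph n).edist x y ≤ 1 ↔
      EE ((orderOf x.1).lcm (orderOf y.1)) ≤ n := by
  rw [SimpleGraph.edist_le_one_iff_adj_or_eq]
  constructor
  · rintro (⟨-, u, v, hu, hv, huv⟩ | rfl)
    · obtain ⟨z, -, hz⟩ := huv.exists_orderOf_eq_lcm
      rw [← hu, ← hv, ← hz]
      exact EE_orderOf z
    · rw [Nat.lcm_self]; exact EE_orderOf _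
  · intro h
    by_cases hxy : x = y
    · exact Or.inr hxy
    · left
      have hx := (orderOf_pos x.1).ne'
      have hy := (orderOf_pos y.1).ne'
      obtain ⟨w, hw⟩ := exists_orderOf (Nat.lcm_ne_zero hx hy) h
      have hw0 : orderOf w ≠ 0 := (orderOf_pos w).ne'
      refine ⟨hxy, w ^ (orderOf w / orderOf x.1), w ^ (orderOf w / orderOf y.1), ?_, ?_, ?_⟩
      · exact orderOf_pow_orderOf_div hw0 (hw ▸ Nat.dvd_lcm_left _ _)
      · exact orderOf_pow_orderOf_div hw0 (hw ▸ Nat.dvd_lcm_right _ _)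
      · exact (Commute.refl w).pow_pow _ _

lemma EE_lcm_prime {a r : ℕ} (hr : r.Prime) (h : ¬ r ∣ a) : EE (a.lcm r) = EE a + r := by
  have hc : Nat.Coprime a r := ((Nat.Prime.coprime_iff_not_dvd hr).2 h).symm
  rw [hc.lcm_eq_mul, EE_mul hc, EE_prime hr]

lemma EE_finset (T : Finset ℕ) (α : ℕ → ℕ) (hT : ∀ p ∈ T, p.Prime) (hα : ∀ p ∈ T, 0 < α p) :
    EE (∏ p ∈ T, p ^ α p) = ∑ p ∈ T, p ^ α p := by
  classical
  induction T using Finset.induction_on with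
  | empty => simp [EE]
  | insert a s ha ih =>
    rw [Finset.prod_insert ha, Finset.sum_insert ha, EE_mul, EE_pow, ih]
    · exact fun p hp => hT p (by simp [hp])
    · exact fun p hp => hα p (by simp [hp])
    · exact hT a (by simp)
    · exact hα a (by simp)
    · refine Nat.Coprime.prod_right fun p hp => ?_
      exact Nat.Coprime.pow _ _ ((Nat.coprime_primes (hT a (by simp))
        (hT p (by simp [hp]))).2 (by rintro rfl; exact ha hp))

lemma prime_dvd_finset {T : Finset ℕ} {α : ℕ → ℕ} (hT : ∀ p ∈ T, p.Prime) {r : ℕ} (hr : r.Prime)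
    (h : r ∣ ∏ p ∈ T, p ^ α p) : r ∈ T := by
  obtain ⟨p, hp, h⟩ := (hr.prime.dvd_finsetProd_iff _).1 h
  have := (Nat.prime_dvd_prime_iff_eq hr (hT p hp)).1 (hr.dvd_of_dvd_pow h)
  rwa [this]

/-- minimal prime is at most n/2 -/
lemma two_mul_minFac_le {n a : ℕ} (h₁ : ¬ n.Prime) (h₂ : ¬ (n - 1).Prime)
    (ha : a ≠ 1) (h : EE a ≤ n) (h' : n - 1 ≤ EE a) (ha0 : a ≠ 0) : 2 * a.minFac ≤ n := by
  have hp := Nat.minFac_prime ha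
  have hd := Nat.minFac_dvd a
  set p := a.minFac with hpd
  obtain ⟨c, hc⟩ := hd
  have hc1 : c ≠ 1 := by
    rintro rfl
    rw [mul_one] at hc
    rw [hc, EE_prime hp] at h h'
    rcases (by omega : p = n ∨ p = n - 1) with h3 | h3
    · exact h₁ (h3 ▸ hp)
    · exact h₂ (h3 ▸ hp)
  have hq := Nat.minFac_prime hc1
  have hqc := Nat.minFac_dvd c
  set q := c.minFac
  have hqa : p * q ∣ a := by rw [hc]; exact Nat.mul_dvd_mul_left _ hqc
  have hle : p ≤ q := Nat.minFac_le_of_dvd hq.two_le (dvd_of_mul_left_dvd hqa)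
  have hE := (EE_mono ha0 hqa).trans h
  by_cases hpq : p = q
  · rw [← hpq, ← pow_two, EE_pow hp two_pos] at hE
    nlinarith [hp.two_le]
  · rw [EE_mul ((Nat.coprime_primes hp hq).2 hpq), EE_prime hp, EE_prime hq] at hE
    omega

lemma vert {n m : ℕ} (hm : m ≠ 0) (hm1 : m ≠ 1) (h : EE m ≤ n) :
    ∃ x : {x : Equiv.Perm (Fin n) // x ≠ 1}, orderOf x.1 = m := by
  obtain ⟨g, hg⟩ := exists_orderOf hm h
  exact ⟨⟨g, by rintro rfl; simp at hg; exact hm1 hg.symm⟩, hg⟩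

lemma edist_le_three {n : ℕ} (hn : 4 ≤ n) (h₁ : ¬ n.Prime) (h₂ : ¬ (n - 1).Prime)
    (x y : {x : Equiv.Perm (Fin n) // x ≠ 1}) :
    (reducedOrderSuperCommutingGraph n).edist x y ≤ 3 := by
  -- reduce to finding primes
  have key : ∀ (p q : ℕ), p.Prime → q.Prime → EE ((orderOf x.1).lcm p) ≤ n →
      EE (p.lcm q) ≤ n → EE (q.lcm (orderOf y.1)) ≤ n →
      (reducedOrderSuperCommutingGraph n).edist x y ≤ 3 := by
    intro p q hp hq hxp hpq hqy
    have hx0 := (orderOf_pos x.1).ne'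
    have hy0 := (orderOf_pos y.1).ne'
    have e1 := (EE_mono (Nat.lcm_ne_zero hp.ne_zero hq.ne_zero) (Nat.dvd_lcm_left p q)).trans hpq
    have e2 := (EE_mono (Nat.lcm_ne_zero hp.ne_zero hq.ne_zero) (Nat.dvd_lcm_right p q)).trans hpq
    obtain ⟨u, rfl⟩ := vert hp.ne_zero hp.ne_one e1
    obtain ⟨v, rfl⟩ := vert hq.ne_zero hq.ne_one e2
    rw [← edist_le_one_iff'] at hxp hpq hqy
    calc _ ≤ _ := SimpleGraph.edist_triangle (v := u)
      _ ≤ _ := add_le_add le_rfl (SimpleGraph.edist_triangle (v := v))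
      _ ≤ 1 + (1 + 1) := add_le_add hxp (add_le_add hpq hqy)
      _ = 3 := by norm_num
  have small : ∀ z : {x : Equiv.Perm (Fin n) // x ≠ 1},
      (orderOf z.1).minFac.Prime ∧ (orderOf z.1).minFac ∣ orderOf z.1 ∧
      (orderOf z.1).minFac + 2 ≤ n := by
    intro z
    have hz1 : orderOf z.1 ≠ 1 := by rw [Ne, orderOf_eq_one_iff]; exact z.2
    have hp := Nat.minFac_prime hz1
    have hd := Nat.minFac_dvd (orderOf z.1)
    refine ⟨hp, hd, ?_⟩
    have := (EE_mono (orderOf_pos z.1).ne' hd).trans (EE_orderOf z.1)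
    rw [EE_prime hp] at this
    have a1 : (orderOf z.1).minFac ≠ n := fun h => h₁ (h ▸ hp)
    have a2 : (orderOf z.1).minFac ≠ n - 1 := fun h => h₂ (h ▸ hp)
    omega
  have lp : ∀ z : {x : Equiv.Perm (Fin n) // x ≠ 1}, EE (orderOf z.1) + 2 ≤ n →
      EE ((orderOf z.1).lcm 2) ≤ n := fun z hz =>
    (EE_lcm (orderOf_pos z.1).ne' two_ne_zero).trans (by rwa [EE_prime Nat.prime_two])
  have pp : ∀ p q : ℕ, p.Prime → q.Prime → p + q ≤ n → EE (p.lcm q) ≤ n := fun p q hp hq h =>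
    (EE_lcm hp.ne_zero hq.ne_zero).trans (by rwa [EE_prime hp, EE_prime hq])
  obtain ⟨hp, hpd, hpn⟩ := small x
  obtain ⟨hq, hqd, hqn⟩ := small y
  have sx : EE ((orderOf x.1).lcm (orderOf x.1).minFac) ≤ n := by
    rw [Nat.lcm_eq_left hpd]; exact EE_orderOf _
  have sy : EE ((orderOf y.1).minFac.lcm (orderOf y.1)) ≤ n := by
    rw [Nat.lcm_eq_right hqd]; exact EE_orderOf _
  by_cases hx : EE (orderOf x.1) + 2 ≤ n
  · exact key 2 _ Nat.prime_two hq (lp x hx) (pp _ _ Nat.prime_two hq (by omega)) sy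
  by_cases hy : EE (orderOf y.1) + 2 ≤ n
  · exact key _ 2 hp Nat.prime_two sx (pp _ _ hp Nat.prime_two (by omega))
      (by rw [Nat.lcm_comm]; exact lp y hy)
  have b1 := two_mul_minFac_le h₁ h₂ (by rw [Ne, orderOf_eq_one_iff]; exact x.2)
    (EE_orderOf x.1) (by omega) (orderOf_pos x.1).ne'
  have b2 := two_mul_minFac_le h₁ h₂ (by rw [Ne, orderOf_eq_one_iff]; exact y.2)
    (EE_orderOf y.1) (by omega) (orderOf_pos y.1).ne'
  exact key _ _ hp hq sx (pp _ _ hp hq (by omega)) sy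

/-- The easy two-step characterization. -/
lemma edist_le_two_iff {n : ℕ} (x y : {x : Equiv.Perm (Fin n) // x ≠ 1}) :
    (reducedOrderSuperCommutingGraph n).edist x y ≤ 2 ↔
      ∃ r : ℕ, r.Prime ∧ EE ((orderOf x.1).lcm r) ≤ n ∧ EE ((orderOf y.1).lcm r) ≤ n := by
  have hx0 := (orderOf_pos x.1).ne'
  have hy0 := (orderOf_pos y.1).ne'
  constructor
  · intro h
    have : ∃ z, (reducedOrderSuperCommutingGraph n).edist x z ≤ 1 ∧
        (reducedOrderSuperCommutingGraph n).edist y z ≤ 1 := by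
      rw [← not_lt, SimpleGraph.two_lt_edist_iff] at h
      by_cases hxy : x = y
      · exact ⟨x, by simp, by simp [hxy]⟩
      by_cases ha : (reducedOrderSuperCommutingGraph n).Adj x y
      · exact ⟨y, by rw [SimpleGraph.edist_le_one_iff_adj_or_eq]; exact Or.inl ha, by simp⟩
      have h' : ((reducedOrderSuperCommutingGraph n).commonNeighbors x y).Nonempty := by
        by_contra hne
        exact h ⟨hxy, ha, Set.not_nonempty_iff_eq_empty.1 hne⟩
      obtain ⟨z, hz1, hz2⟩ := h'
      exact ⟨z, by rw [SimpleGraph.edist_le_one_iff_adj_or_eq]; exact Or.inl hz1,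
        by rw [SimpleGraph.edist_le_one_iff_adj_or_eq]; exact Or.inl hz2⟩
    obtain ⟨z, h1, h2⟩ := this
    rw [edist_le_one_iff'] at h1 h2
    have hz0 := (orderOf_pos z.1).ne'
    have hz1 : orderOf z.1 ≠ 1 := by rw [Ne, orderOf_eq_one_iff]; exact z.2
    refine ⟨(orderOf z.1).minFac, Nat.minFac_prime hz1, ?_, ?_⟩
    · exact (EE_mono (Nat.lcm_ne_zero hx0 hz0)
        (Nat.lcm_dvd (Nat.dvd_lcm_left _ _) ((Nat.minFac_dvd _).trans (Nat.dvd_lcm_right _ _)))).trans h1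
    · exact (EE_mono (Nat.lcm_ne_zero hy0 hz0)
        (Nat.lcm_dvd (Nat.dvd_lcm_left _ _) ((Nat.minFac_dvd _).trans (Nat.dvd_lcm_right _ _)))).trans h2
  · rintro ⟨r, hr, h1, h2⟩
    have e := (EE_mono (Nat.lcm_ne_zero hx0 hr.ne_zero) (Nat.dvd_lcm_right _ r)).trans h1
    obtain ⟨u, rfl⟩ := vert hr.ne_zero hr.ne_one e
    rw [← edist_le_one_iff'] at h1 h2
    rw [SimpleGraph.edist_comm] at h2
    calc _ ≤ _ := SimpleGraph.edist_triangle (v := u)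
      _ ≤ 1 + 1 := add_le_add h1 h2
      _ = 2 := by norm_num

lemma diam_three_iff {n : ℕ} (hn : 4 ≤ n) (h₁ : ¬ n.Prime) (h₂ : ¬ (n - 1).Prime) :
    (reducedOrderSuperCommutingGraph n).diam = 3 ↔
      ∃ x y, ¬ (reducedOrderSuperCommutingGraph n).edist x y ≤ 2 := by
  have hle : (reducedOrderSuperCommutingGraph n).ediam ≤ 3 :=
    SimpleGraph.ediam_le_of_edist_le (edist_le_three hn h₁ h₂)
  have hne : (reducedOrderSuperCommutingGraph n).ediam ≠ ⊤ := by
    intro h; rw [h] at hle; exact absurd hle (by decide)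
  have hcast : ((reducedOrderSuperCommutingGraph n).diam : ℕ∞) =
      (reducedOrderSuperCommutingGraph n).ediam := ENat.natCast_toNat hne
  constructor
  · intro h
    by_contra! hc
    have := SimpleGraph.ediam_le_of_edist_le hc
    rw [← hcast, h] at this
    exact absurd this (by decide)
  · rintro ⟨x, y, hxy⟩
    have h3 : ¬ (reducedOrderSuperCommutingGraph n).ediam ≤ 2 := fun h =>
      hxy (SimpleGraph.edist_le_ediam.trans h)
    rw [← hcast] at hle h3
    have a : (reducedOrderSuperCommutingGraph n).diam ≤ 3 := by exact_mod_cast hle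
    have b : ¬ (reducedOrderSuperCommutingGraph n).diam ≤ 2 := fun h => h3 (by exact_mod_cast h)
    omega

lemma prime_le_of {n m p : ℕ} (hm : m ≠ 0) (h : EE m ≤ n) (hp : p ∈ m.primeFactors) :
    p.Prime ∧ p ≤ n := by
  have hp' := Nat.prime_of_mem_primeFactors hp
  have := EE_mono hm (Nat.dvd_of_mem_primeFactors hp)
  rw [EE_prime hp'] at this
  exact ⟨hp', this.trans h⟩

lemma build {n a b : ℕ} (ha0 : a ≠ 0) (ha1 : a ≠ 1) (hb0 : b ≠ 0) (hb1 : b ≠ 1)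
    (ha : EE a ≤ n) (hb : EE b ≤ n) (hE : n - 1 ≤ EE a)
    (H : ¬ ∃ r : ℕ, r.Prime ∧ EE (a.lcm r) ≤ n ∧ EE (b.lcm r) ≤ n) :
    ∃ (T₁ T₂ : Finset ℕ) (α β : ℕ → ℕ),
        T₁.Nonempty ∧ T₂.Nonempty ∧ Disjoint T₁ T₂ ∧
        (∀ p ∈ T₁, p.Prime ∧ p ≤ n) ∧ (∀ q ∈ T₂, q.Prime ∧ q ≤ n) ∧
        (∀ p ∈ T₁, 0 < α p) ∧ (∀ q ∈ T₂, 0 < β q) ∧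
        (∑ p ∈ T₁, p ^ α p = n - 1 ∨ ∑ p ∈ T₁, p ^ α p = n) ∧
        (∑ q ∈ T₂, q ^ β q ≤ n) ∧
        (∀ p ∈ T₁, n < p + ∑ q ∈ T₂, q ^ β q) := by
  have hnd : ∀ p ∈ a.primeFactors, ¬ p ∣ b ∧ n < p + EE b := by
    intro p hp
    have hp' := Nat.prime_of_mem_primeFactors hp
    have hd := Nat.dvd_of_mem_primeFactors hp
    have h1 : EE (a.lcm p) ≤ n := by rwa [Nat.lcm_eq_left hd]
    have h2 : ¬ p ∣ b := fun h => H ⟨p, hp', h1, by rwa [Nat.lcm_eq_left h]⟩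
    refine ⟨h2, ?_⟩
    by_contra h3
    exact H ⟨p, hp', h1, by rw [EE_lcm_prime hp' h2]; omega⟩
  have hpos : ∀ m p : ℕ, p ∈ m.primeFactors → 0 < m.factorization p := fun m p h =>
    Nat.pos_of_ne_zero (by rwa [← Finsupp.mem_support_iff, Nat.support_factorization])
  refine ⟨a.primeFactors, b.primeFactors, a.factorization, b.factorization,
    Nat.nonempty_primeFactors.2 (by omega), Nat.nonempty_primeFactors.2 (by omega),
    Finset.disjoint_left.2 fun p hp hp' => (hnd p hp).1 (Nat.dvd_of_mem_primeFactors hp'),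
    fun p hp => prime_le_of ha0 ha hp, fun p hp => prime_le_of hb0 hb hp,
    hpos a, hpos b, ?_, hb, fun p hp => (hnd p hp).2⟩
  change EE a = n - 1 ∨ EE a = n
  omega

theorem stmt12 (n : ℕ) (hn : 4 ≤ n) (h₁ : ¬ n.Prime) (h₂ : ¬ (n - 1).Prime) :
    (reducedOrderSuperCommutingGraph n).diam = 3 ↔
      ∃ (T₁ T₂ : Finset ℕ) (α β : ℕ → ℕ),
        T₁.Nonempty ∧ T₂.Nonempty ∧ Disjoint T₁ T₂ ∧
        (∀ p ∈ T₁, p.Prime ∧ p ≤ n) ∧ (∀ q ∈ T₂, q.Prime ∧ q ≤ n) ∧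
        (∀ p ∈ T₁, 0 < α p) ∧ (∀ q ∈ T₂, 0 < β q) ∧
        (∑ p ∈ T₁, p ^ α p = n - 1 ∨ ∑ p ∈ T₁, p ^ α p = n) ∧
        (∑ q ∈ T₂, q ^ β q ≤ n) ∧
        (∀ p ∈ T₁, n < p + ∑ q ∈ T₂, q ^ β q) := by
  rw [diam_three_iff hn h₁ h₂]
  constructor
  · rintro ⟨x, y, H⟩
    rw [edist_le_two_iff] at H
    have hx0 := (orderOf_pos x.1).ne'
    have hy0 := (orderOf_pos y.1).ne'
    have hx1 : orderOf x.1 ≠ 1 := by rw [Ne, orderOf_eq_one_iff]; exact x.2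
    have hy1 : orderOf y.1 ≠ 1 := by rw [Ne, orderOf_eq_one_iff]; exact y.2
    have hx := EE_orderOf x.1
    have hy := EE_orderOf y.1
    by_cases h : n - 1 ≤ EE (orderOf x.1)
    · exact build hx0 hx1 hy0 hy1 hx hy h H
    by_cases h' : n - 1 ≤ EE (orderOf y.1)
    · exact build hy0 hy1 hx0 hx1 hy hx h' (fun ⟨r, hr, a, b⟩ => H ⟨r, hr, b, a⟩)
    exfalso
    refine H ⟨2, Nat.prime_two, ?_, ?_⟩
    · refine (EE_lcm hx0 two_ne_zero).trans ?_
      rw [EE_prime Nat.prime_two]; omega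
    · refine (EE_lcm hy0 two_ne_zero).trans ?_
      rw [EE_prime Nat.prime_two]; omega
  · rintro ⟨T₁, T₂, α, β, ⟨p₁, hp₁⟩, ⟨q₁, hq₁⟩, hdis, hT₁, hT₂, hα, hβ, hM₁, hM₂, hlt⟩
    have pT₁ := fun p hp => (hT₁ p hp).1
    have pT₂ := fun p hp => (hT₂ p hp).1
    have e₁ := EE_finset T₁ α pT₁ hα
    have e₂ := EE_finset T₂ β pT₂ hβ
    have d₁ : p₁ ∣ ∏ p ∈ T₁, p ^ α p :=
      (dvd_pow_self p₁ (hα p₁ hp₁).ne').trans (Finset.dvd_prod_of_mem _ hp₁)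
    have d₂ : q₁ ∣ ∏ p ∈ T₂, p ^ β p :=
      (dvd_pow_self q₁ (hβ q₁ hq₁).ne').trans (Finset.dvd_prod_of_mem _ hq₁)
    have u₁ := fun (r : ℕ) (hr : r.Prime) => prime_dvd_finset (α := α) pT₁ hr
    have u₂ := fun (r : ℕ) (hr : r.Prime) => prime_dvd_finset (α := β) pT₂ hr
    have z₁ : ∏ p ∈ T₁, p ^ α p ≠ 0 :=
      Finset.prod_ne_zero_iff.2 fun p hp => pow_ne_zero _ (pT₁ p hp).ne_zero
    have z₂ : ∏ p ∈ T₂, p ^ β p ≠ 0 :=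
      Finset.prod_ne_zero_iff.2 fun p hp => pow_ne_zero _ (pT₂ p hp).ne_zero
    rw [← e₁] at hM₁
    rw [← e₂] at hM₂ hlt
    obtain ⟨x, hx⟩ := vert (n := n) z₁
      (fun h => (pT₁ p₁ hp₁).ne_one (Nat.dvd_one.1 (h ▸ d₁))) (by omega)
    obtain ⟨y, hy⟩ := vert (n := n) z₂
      (fun h => (pT₂ q₁ hq₁).ne_one (Nat.dvd_one.1 (h ▸ d₂))) hM₂
    refine ⟨x, y, ?_⟩
    rw [edist_le_two_iff, hx, hy]
    rintro ⟨r, hr, h1, h2⟩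
    by_cases hra : r ∣ ∏ p ∈ T₁, p ^ α p
    · have hr1 := u₁ r hr hra
      have hrb : ¬ r ∣ ∏ p ∈ T₂, p ^ β p := fun h =>
        Finset.disjoint_left.1 hdis hr1 (u₂ r hr h)
      rw [EE_lcm_prime hr hrb] at h2
      have := hlt r hr1
      omega
    · rw [EE_lcm_prime hr hra] at h1
      have := hr.two_le
      omega
end

section
/- The coefficients γ_m of the polynomial ∏_{i=1}^{13}(1 + x^{q_{4,1}(i)}) = (1+x⁵)(1+x¹³)(1+x¹⁷)(1+x²⁹)(1+x³⁷)(1+x⁴¹)(1+x⁵³)(1+x⁶¹)(1+x⁷³)(1+x⁸⁹)(1+x⁹⁷)(1+x¹⁰¹)(1+x¹⁰⁹) satisfy γ_m ≥ 1 for every m with 122 ≤ m ≤ 603, while γ₁₂₁ = γ₆₀₄ = 0. -/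
open Polynomial

/-- The generating polynomial `∏_{i=1}^{13} (1 + x ^ q_{4,1}(i))` of the first `13`
primes congruent to `1` modulo `4`, namely `5, 13, 17, 29, 37, 41, 53, 61, 73, 89, 97,
101, 109`. -/
noncomputable def genPoly41 : Polynomial ℕ :=
  (1 + X ^ 5) * (1 + X ^ 13) * (1 + X ^ 17) * (1 + X ^ 29) * (1 + X ^ 37) *
    (1 + X ^ 41) * (1 + X ^ 53) * (1 + X ^ 61) * (1 + X ^ 73) * (1 + X ^ 89) *
    (1 + X ^ 97) * (1 + X ^ 101) * (1 + X ^ 109)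

theorem step41 {p : Polynomial ℕ} {b : ℕ} (h : ∀ m, b.testBit m = true ↔ p.coeff m ≠ 0) (q : ℕ) :
    ∀ m, (b ||| (b <<< q)).testBit m = true ↔ (p * (1 + X ^ q)).coeff m ≠ 0 := by
  intro m
  rw [mul_add, mul_one, coeff_add, coeff_mul_X_pow', Nat.testBit_or, Nat.testBit_shiftLeft]
  by_cases hq : q ≤ m
  · simp only [Bool.or_eq_true, h, hq, ge_iff_le, decide_true, Bool.true_and, if_true]
    omega
  · simp [h, hq]

theorem base41 : ∀ m, (1 : ℕ).testBit m = true ↔ (1 : Polynomial ℕ).coeff m ≠ 0 := by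
  intro m
  rw [coeff_one, Nat.testBit_one_eq_true_iff_self_eq_zero]
  simp

def mask41 : ℕ :=
  [5, 13, 17, 29, 37, 41, 53, 61, 73, 89, 97, 101, 109].foldl (fun b q => b ||| (b <<< q)) 1

theorem mask41_spec (m : ℕ) : mask41.testBit m = true ↔ genPoly41.coeff m ≠ 0 := by
  have h := step41 (step41 (step41 (step41 (step41 (step41 (step41 (step41 (step41 (step41
    (step41 (step41 (step41 base41 5) 13) 17) 29) 37) 41) 53) 61) 73) 89) 97) 101) 109 m
  rw [one_mul] at h
  exact h

theorem mask41_pos : ∀ i < 482, mask41.testBit (122 + i) = true := by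
  decide +kernel

theorem mask41_zero : mask41.testBit 121 = false ∧ mask41.testBit 604 = false := by
  decide +kernel

/-- The coefficients `γ m` of `(1+x⁵)(1+x¹³)⋯(1+x¹⁰¹)(1+x¹⁰⁹)` satisfy `γ m ≥ 1` for
every `122 ≤ m ≤ 603`, while `γ 121 = γ 604 = 0`. -/
theorem stmt14 :
    (∀ m, 122 ≤ m → m ≤ 603 → 1 ≤ genPoly41.coeff m) ∧
      genPoly41.coeff 121 = 0 ∧ genPoly41.coeff 604 = 0 := by
  refine ⟨fun m h1 h2 => ?_, ?_, ?_⟩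
  · have h := mask41_pos (m - 122) (by omega)
    rw [show 122 + (m - 122) = m by omega, mask41_spec] at h
    omega
  · by_contra h
    rw [← ne_eq, ← mask41_spec, mask41_zero.1] at h
    exact absurd h (by decide)
  · by_contra h
    rw [← ne_eq, ← mask41_spec, mask41_zero.2] at h
    exact absurd h (by decide)
end
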